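/- arXiv:2207.11758 — 2 statements merged into one kernel-verified Lean document; each statement's English description precedes it below -/
import Mathlib

section
/- For all integers k > ℓ ≥ 1 there exists a constant c_{k,ℓ} > 0 such that the following holds. Let H : ℕ → ℕ be any function with H(X) → ∞ as X → ∞ and H(X) ≤ X·(log X)^{−c_{k,ℓ}} for all sufficiently large X. Then, with 𝔼_f the Steinhaus expectation at level y = X + H(X) and A_H(f,x) := H(X)^{-1/2} ∑_{x < n ≤ x+H(X)} f(n), one has 𝔼_f | (1/X) ∑_{x=1}^{X} A_H(f,x)^k · conj(A_H(f,x))^ℓ |² → 0 as X → ∞, where conj denotes complex conjugation. -/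
open MeasureTheory

/-- The Steinhaus probability space at level `y`: a uniform random point
`ω p ∈ [0,1]` for each coordinate `p ≤ y` (only the prime coordinates are used);
the random multiplicative function has `f(p) = e^{2πi ω(p)}`, which is uniformly
distributed on the unit circle, independently over primes `p ≤ y`. -/
noncomputable def steinhausMeasure (y : ℕ) : Measure (Fin (y + 1) → ℝ) :=
  Measure.pi fun _ => volume.restrict (Set.Ioc (0 : ℝ) 1)

/-- The Steinhaus random completely multiplicative function at level `y`:
`f_ω(n) = ∏_{p ≤ y prime} e^{2πi ω(p) v_p(n)}`. -/
noncomputable def steinhausF (y : ℕ) (ω : Fin (y + 1) → ℝ) (n : ℕ) : ℂ :=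
  ∏ p ∈ (Finset.range (y + 1)).attach,
    if Nat.Prime (p : ℕ) then
      Complex.exp
        (((2 * Real.pi * ω ⟨(p : ℕ), Finset.mem_range.mp p.2⟩ *
            (padicValNat (p : ℕ) n : ℝ) : ℝ) : ℂ) * Complex.I)
    else 1

/-- `A_H(f, x) = H(X)^{-1/2} ∑_{x < n ≤ x + H(X)} f(n)` at level `y = X + H(X)`. -/
noncomputable def AHf (X : ℕ) (H : ℕ → ℕ) (ω : Fin (X + H X + 1) → ℝ) (x : ℕ) : ℂ :=
  ((Real.sqrt (H X) : ℂ))⁻¹ * ∑ n ∈ Finset.Ioc x (x + H X), steinhausF (X + H X) ω n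

open Finset in
lemma steinhausF_eq_prod (y : ℕ) (ω : Fin (y + 1) → ℝ) (n : ℕ) :
    steinhausF y ω n = ∏ i : Fin (y + 1), if Nat.Prime (i : ℕ) then
      Complex.exp (((2 * Real.pi * ω i * (padicValNat (i : ℕ) n : ℝ) : ℝ) : ℂ) * Complex.I)
      else 1 := by
  let g : ℕ → ℂ := fun p => if h : p < y + 1 then
    (if Nat.Prime p then
      Complex.exp (((2 * Real.pi * ω ⟨p, h⟩ * (padicValNat p n : ℝ) : ℝ) : ℂ) * Complex.I)
      else 1) else 1
  have h1 : steinhausF y ω n = ∏ p ∈ (range (y + 1)).attach, g p := by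
    refine prod_congr rfl fun p _ => ?_
    simp only [g, dif_pos (mem_range.mp p.2)]
  rw [h1, prod_attach _ g, prod_range]
  refine prod_congr rfl fun i _ => ?_
  simp only [g, dif_pos i.2]

lemma steinhausF_one (y : ℕ) (ω : Fin (y + 1) → ℝ) : steinhausF y ω 1 = 1 := by
  simp [steinhausF_eq_prod]

lemma steinhausF_mul (y : ℕ) (ω : Fin (y + 1) → ℝ) {a b : ℕ} (ha : a ≠ 0) (hb : b ≠ 0) :
    steinhausF y ω (a * b) = steinhausF y ω a * steinhausF y ω b := by
  simp only [steinhausF_eq_prod, ← Finset.prod_mul_distrib]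
  refine Finset.prod_congr rfl fun i _ => ?_
  split_ifs with hp
  · have : Fact (Nat.Prime (i : ℕ)) := ⟨hp⟩
    rw [padicValNat.mul ha hb, ← Complex.exp_add]
    congr 1
    push_cast
    ring
  · simp

lemma steinhausF_prod (y : ℕ) (ω : Fin (y + 1) → ℝ) {ι : Type*} (s : Finset ι) (a : ι → ℕ)
    (ha : ∀ i ∈ s, a i ≠ 0) :
    steinhausF y ω (∏ i ∈ s, a i) = ∏ i ∈ s, steinhausF y ω (a i) := by
  classical
  induction s using Finset.induction_on with
  | empty => simp [steinhausF_one]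
  | insert i s hi ih =>
    have has : ∀ j ∈ s, a j ≠ 0 := fun j hj => ha j (Finset.mem_insert_of_mem hj)
    rw [Finset.prod_insert hi, Finset.prod_insert hi,
      steinhausF_mul y ω (ha i (Finset.mem_insert_self i s)) (Finset.prod_ne_zero_iff.mpr has),
      ih has]

lemma norm_steinhausF (y : ℕ) (ω : Fin (y + 1) → ℝ) (n : ℕ) : ‖steinhausF y ω n‖ = 1 := by
  rw [steinhausF_eq_prod, norm_prod]
  refine Finset.prod_eq_one fun i _ => ?_
  split_ifs
  · exact Complex.norm_exp_ofReal_mul_I _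
  · simp

lemma continuous_steinhausF (y n : ℕ) : Continuous fun ω => steinhausF y ω n := by
  simp only [steinhausF_eq_prod]
  refine continuous_finsetProd _ fun i _ => ?_
  split_ifs <;> fun_prop

instance isProbabilityMeasure_steinhausMeasure (y : ℕ) :
    IsProbabilityMeasure (steinhausMeasure y) := by
  have : IsProbabilityMeasure (volume.restrict (Set.Ioc (0 : ℝ) 1)) := ⟨by simp⟩
  unfold steinhausMeasure
  infer_instance

lemma integrable_steinhausF_mul_conj (y a b : ℕ) :
    Integrable (fun ω => steinhausF y ω a * starRingEnd ℂ (steinhausF y ω b))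
      (steinhausMeasure y) := by
  refine Integrable.of_bound (C := 1) ?_ (ae_of_all _ fun ω => ?_)
  · exact ((continuous_steinhausF y a).mul
      (Complex.continuous_conj.comp (continuous_steinhausF y b))).aestronglyMeasurable
  · simp [norm_steinhausF]

lemma integral_exp_two_pi_int_mul {m : ℤ} (hm : m ≠ 0) :
    ∫ t in Set.Ioc (0 : ℝ) 1, Complex.exp (2 * Real.pi * m * Complex.I * t) = 0 := by
  have hc : (2 * Real.pi * m * Complex.I : ℂ) ≠ 0 := by
    simp [hm, Real.pi_ne_zero]
  rw [← intervalIntegral.integral_of_le zero_le_one, integral_exp_mul_complex hc]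
  have : (2 * Real.pi * m * Complex.I : ℂ) = m * (2 * Real.pi * Complex.I) := by ring
  simp [this, Complex.exp_int_mul_two_pi_mul_I]

/-- Orthogonality of the Steinhaus random multiplicative function. -/
lemma integral_steinhausF_mul_conj {y a b : ℕ} (ha : a ≠ 0) (hb : b ≠ 0)
    (hay : ∀ p, p.Prime → p ∣ a → p ≤ y) (hby : ∀ p, p.Prime → p ∣ b → p ≤ y) :
    ∫ ω, steinhausF y ω a * starRingEnd ℂ (steinhausF y ω b) ∂(steinhausMeasure y)
      = if a = b then 1 else 0 := by
  split_ifs with hab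
  · subst hab
    simp [Complex.mul_conj, Complex.normSq_eq_norm_sq, norm_steinhausF]
  · let φ : Fin (y + 1) → ℝ → ℂ := fun i t => if Nat.Prime (i : ℕ) then
      Complex.exp (2 * Real.pi * (((padicValNat i a : ℤ) - (padicValNat i b : ℤ) : ℤ) : ℂ) *
        Complex.I * t) else 1
    have hφ : ∀ ω : Fin (y + 1) → ℝ,
        steinhausF y ω a * starRingEnd ℂ (steinhausF y ω b) = ∏ i, φ i (ω i) := by
      intro ω
      rw [steinhausF_eq_prod, steinhausF_eq_prod, map_prod, ← Finset.prod_mul_distrib]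
      refine Finset.prod_congr rfl fun i _ => ?_
      simp only [φ]
      split_ifs
      · rw [← Complex.exp_conj, ← Complex.exp_add, map_mul, Complex.conj_ofReal, Complex.conj_I]
        congr 1
        simp only [Complex.ofReal_mul, Complex.ofReal_natCast, Complex.ofReal_ofNat, Int.cast_sub,
          Int.cast_natCast]
        ring
      · simp
    simp only [hφ]
    rw [steinhausMeasure, integral_fintype_prod_eq_prod]
    obtain ⟨p, hp, hne⟩ : ∃ p, p.Prime ∧ padicValNat p a ≠ padicValNat p b := by
      by_contra! h
      exact hab ((Nat.eq_iff_prime_padicValNat_eq a b ha hb).mpr h)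
    have hpy : p ≤ y := by
      by_cases hpa : p ∣ a
      · exact hay p hp hpa
      · refine hby p hp ?_
        by_contra hpb
        exact hne (by rw [padicValNat.eq_zero_of_not_dvd hpa, padicValNat.eq_zero_of_not_dvd hpb])
    refine Finset.prod_eq_zero (Finset.mem_univ (⟨p, Nat.lt_succ_of_le hpy⟩ : Fin (y + 1))) ?_
    simp only [φ, hp, if_true]
    exact integral_exp_two_pi_int_mul (by omega)

open Finset in
/-- The correlation of two products of sums of a Steinhaus random multiplicative function counts
the solutions of a multiplicative equation. -/
lemma integral_prod_sum_mul_conj {ι : Type*} [Fintype ι] [DecidableEq ι] {y : ℕ}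
    (J J' : ι → Finset ℕ) (hJ : ∀ i, ∀ n ∈ J i, n ≠ 0 ∧ n ≤ y)
    (hJ' : ∀ i, ∀ n ∈ J' i, n ≠ 0 ∧ n ≤ y) :
    Integrable (fun ω => (∏ i, ∑ n ∈ J i, steinhausF y ω n) *
        starRingEnd ℂ (∏ i, ∑ n ∈ J' i, steinhausF y ω n)) (steinhausMeasure y) ∧
    ∫ ω, (∏ i, ∑ n ∈ J i, steinhausF y ω n) *
        starRingEnd ℂ (∏ i, ∑ n ∈ J' i, steinhausF y ω n) ∂(steinhausMeasure y)
      = ((∑ a ∈ Fintype.piFinset J,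
          #{b ∈ Fintype.piFinset J' | ∏ i, a i = ∏ i, b i} : ℕ) : ℂ) := by
  have hne : ∀ {K : ι → Finset ℕ}, (∀ i, ∀ n ∈ K i, n ≠ 0 ∧ n ≤ y) →
      ∀ a ∈ Fintype.piFinset K, (∏ i, a i ≠ 0) ∧ ∀ p : ℕ, p.Prime → p ∣ ∏ i, a i → p ≤ y := by
    intro K hK a ha
    rw [Fintype.mem_piFinset] at ha
    refine ⟨prod_ne_zero_iff.mpr fun i _ => (hK i _ (ha i)).1, fun p hp hd => ?_⟩
    obtain ⟨i, -, hi⟩ := (hp.prime.dvd_finsetProd_iff _).mp hd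
    exact (Nat.le_of_dvd (Nat.pos_of_ne_zero (hK i _ (ha i)).1) hi).trans (hK i _ (ha i)).2
  have hexp : ∀ {K : ι → Finset ℕ}, (∀ i, ∀ n ∈ K i, n ≠ 0 ∧ n ≤ y) → ∀ ω,
      ∏ i, ∑ n ∈ K i, steinhausF y ω n
        = ∑ a ∈ Fintype.piFinset K, steinhausF y ω (∏ i, a i) := by
    intro K hK ω
    rw [prod_univ_sum]
    refine sum_congr rfl fun a ha => ?_
    rw [steinhausF_prod]
    exact fun i _ => (hK i _ (Fintype.mem_piFinset.mp ha i)).1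
  have hint : ∀ a b : ι → ℕ, Integrable (fun ω => steinhausF y ω (∏ i, a i) *
      starRingEnd ℂ (steinhausF y ω (∏ i, b i))) (steinhausMeasure y) :=
    fun a b => integrable_steinhausF_mul_conj y _ _
  simp only [hexp hJ, hexp hJ', map_sum, sum_mul_sum]
  refine ⟨integrable_finsetSum _ fun a _ => integrable_finsetSum _ fun b _ => hint a b, ?_⟩
  rw [integral_finsetSum _ fun a _ => integrable_finsetSum _ fun b _ => hint a b]
  push_cast
  refine sum_congr rfl fun a ha => ?_
  rw [integral_finsetSum _ fun b _ => hint a b, card_filter]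
  push_cast
  refine sum_congr rfl fun b hb => ?_
  exact integral_steinhausF_mul_conj (hne hJ a ha).1 (hne hJ' b hb).1 (hne hJ a ha).2
    (hne hJ' b hb).2

open Finset in
lemma card_divisors_mul_le (m n : ℕ) :
    #(m * n).divisors ≤ #m.divisors * #n.divisors := by
  rw [Nat.divisors_mul]
  exact card_mul_le

open Finset in
lemma card_divisors_prod_le {ι : Type*} (s : Finset ι) (a : ι → ℕ) :
    #(∏ i ∈ s, a i).divisors ≤ ∏ i ∈ s, #(a i).divisors := by
  classical
  induction s using Finset.induction_on with
  | empty => simp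
  | insert i s hi ih =>
    rw [prod_insert hi, prod_insert hi]
    exact (card_divisors_mul_le _ _).trans (Nat.mul_le_mul_left _ ih)

open Finset in
/-- The divisor bound for the number of solutions of `∏ a = ∏ b` in boxes. -/
lemma sum_card_prod_eq_prod_le {ι : Type*} [Fintype ι] [DecidableEq ι] (J J' : ι → Finset ℕ)
    (hJ : ∀ i, ∀ n ∈ J i, n ≠ 0) :
    ∑ a ∈ Fintype.piFinset J, #{b ∈ Fintype.piFinset J' | ∏ i, a i = ∏ i, b i}
      ≤ ∏ i, ∑ n ∈ J i, #n.divisors ^ Fintype.card ι := by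
  rw [prod_univ_sum]
  refine sum_le_sum fun a ha => ?_
  have ha0 : ∏ i, a i ≠ 0 :=
    prod_ne_zero_iff.mpr fun i _ => hJ i _ (Fintype.mem_piFinset.mp ha i)
  calc #{b ∈ Fintype.piFinset J' | ∏ i, a i = ∏ i, b i}
      ≤ #(Fintype.piFinset fun _ : ι => (∏ i, a i).divisors) := by
        refine card_le_card fun b hb => ?_
        rw [mem_filter] at hb
        rw [Fintype.mem_piFinset]
        refine fun i => Nat.mem_divisors.mpr ⟨?_, ha0⟩
        rw [hb.2]
        exact dvd_prod_of_mem b (mem_univ i)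
    _ = #(∏ i, a i).divisors ^ Fintype.card ι := by simp
    _ ≤ (∏ i, #(a i).divisors) ^ Fintype.card ι :=
        Nat.pow_le_pow_left (card_divisors_prod_le _ _) _
    _ = ∏ i, #(a i).divisors ^ Fintype.card ι := (prod_pow _ _ _).symm

open Finset in
/-- Logarithmic moments of the divisor function. -/
lemma sum_card_divisors_pow_div_le (N m : ℕ) :
    ∑ n ∈ Icc 1 N, (#n.divisors : ℝ) ^ m / n ≤ (1 + Real.log N) ^ 2 ^ m := by
  induction m with
  | zero =>
    have h := harmonic_le_one_add_log N
    rw [harmonic_eq_sum_Icc] at h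
    push_cast at h
    simpa using h
  | succ m ih =>
    have h0 : 0 ≤ ∑ n ∈ Icc 1 N, (#n.divisors : ℝ) ^ m / n := sum_nonneg fun n _ => by positivity
    calc ∑ n ∈ Icc 1 N, (#n.divisors : ℝ) ^ (m + 1) / n
        = ∑ n ∈ Icc 1 N, ∑ e ∈ n.divisorsAntidiagonal,
            (#(e.1 * e.2).divisors : ℝ) ^ m / ((e.1 * e.2 : ℕ) : ℝ) := by
          refine sum_congr rfl fun n _ => ?_
          have : ∀ e ∈ n.divisorsAntidiagonal,
              (#(e.1 * e.2).divisors : ℝ) ^ m / ((e.1 * e.2 : ℕ) : ℝ)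
                = (#n.divisors : ℝ) ^ m / n := by
            intro e he
            rw [(Nat.mem_divisorsAntidiagonal.mp he).1]
          rw [sum_congr rfl this, sum_const, nsmul_eq_mul, ← Nat.map_div_right_divisors, card_map]
          ring
      _ ≤ ∑ n ∈ Icc 1 N, ∑ e ∈ n.divisorsAntidiagonal,
            ((#e.1.divisors : ℝ) ^ m / e.1) * ((#e.2.divisors : ℝ) ^ m / e.2) := by
          refine sum_le_sum fun n _ => sum_le_sum fun e _ => ?_
          rw [div_mul_div_comm, ← mul_pow]
          push_cast
          gcongr
          exact_mod_cast card_divisors_mul_le e.1 e.2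
      _ = ∑ s ∈ (Icc 1 N).sigma fun n => n.divisorsAntidiagonal,
            ((#s.2.1.divisors : ℝ) ^ m / s.2.1) * ((#s.2.2.divisors : ℝ) ^ m / s.2.2) := by
          rw [sum_sigma]
      _ = ∑ e ∈ ((Icc 1 N).sigma fun n => n.divisorsAntidiagonal).image fun s => s.2,
            ((#e.1.divisors : ℝ) ^ m / e.1) * ((#e.2.divisors : ℝ) ^ m / e.2) := by
          rw [sum_image]
          rintro ⟨n, e⟩ hn ⟨n', e'⟩ hn' h
          simp only [coe_sigma, Set.mem_sigma_iff, mem_coe, Nat.mem_divisorsAntidiagonal] at hn hn' h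
          subst h
          obtain rfl : n = n' := hn.2.1.symm.trans hn'.2.1
          rfl
      _ ≤ ∑ e ∈ Icc 1 N ×ˢ Icc 1 N,
            ((#e.1.divisors : ℝ) ^ m / e.1) * ((#e.2.divisors : ℝ) ^ m / e.2) := by
          refine sum_le_sum_of_subset_of_nonneg ?_ fun e _ _ => by positivity
          intro e he
          simp only [mem_image, mem_sigma, mem_Icc, Nat.mem_divisorsAntidiagonal, Sigma.exists] at he
          obtain ⟨n, e', ⟨⟨h1, hN⟩, hmul, h0⟩, rfl⟩ := he
          have hpos : 0 < e'.1 * e'.2 := by omega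
          have h1 := Nat.pos_of_mul_pos_right hpos
          have h2 := Nat.pos_of_mul_pos_left hpos
          simp only [mem_product, mem_Icc]
          refine ⟨⟨by assumption, ?_⟩, by assumption, ?_⟩ <;> nlinarith
      _ = (∑ n ∈ Icc 1 N, (#n.divisors : ℝ) ^ m / n) ^ 2 := by
          rw [sq, sum_mul_sum, sum_product]
      _ ≤ ((1 + Real.log N) ^ 2 ^ m) ^ 2 := by gcongr
      _ = (1 + Real.log N) ^ 2 ^ (m + 1) := by rw [← pow_mul, ← pow_succ]

open Finset in
lemma sum_card_divisors_pow_le (N m : ℕ) :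
    ∑ n ∈ Icc 1 N, (#n.divisors : ℝ) ^ m ≤ N * (1 + Real.log N) ^ 2 ^ m := by
  refine le_trans ?_ (mul_le_mul_of_nonneg_left (sum_card_divisors_pow_div_le N m)
    (Nat.cast_nonneg N))
  rw [mul_sum]
  refine sum_le_sum fun n hn => ?_
  rw [mem_Icc] at hn
  have hn0 : (0 : ℝ) < n := by exact_mod_cast hn.1
  have hnN : (n : ℝ) ≤ N := by exact_mod_cast hn.2
  rw [mul_div_assoc', le_div_iff₀ hn0, mul_comm]
  gcongr

lemma one_add_pow_le_of_le_one {t : ℝ} (h0 : 0 ≤ t) (h1 : t ≤ 1) (r : ℕ) :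
    (1 + t) ^ r ≤ 1 + (2 ^ r - 1) * t := by
  induction r with
  | zero => simp
  | succ r ih =>
    have h2 : (1 : ℝ) ≤ 2 ^ r := one_le_pow₀ (by norm_num)
    rw [pow_succ, pow_succ]
    nlinarith [mul_le_mul_of_nonneg_right ih (by linarith : 0 ≤ 1 + t),
      mul_nonneg (sub_nonneg.mpr h2) (mul_nonneg h0 (sub_nonneg.mpr h1))]

/-- If `v` is much larger than `u` on the scale `h`, a box of side `h` at height `v` cannot
balance one at height `u` with unequal multiplicities. -/
lemma le_add_of_pow_mul_pow_le {u v h : ℝ} {k l : ℕ} (hlk : l < k) (hh : 0 ≤ h) (hu : 0 < u)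
    (hhu : h ≤ u) (hle : v ^ k * u ^ l ≤ (u + h) ^ k * (v + h) ^ l) :
    v ≤ u + 2 ^ (k + l) * h := by
  by_contra! hlt
  have huv : u ≤ v := by
    have : 0 ≤ 2 ^ (k + l) * h := by positivity
    linarith
  have hv : 0 < v := hu.trans_le huv
  set t := h / u with ht
  have ht0 : 0 ≤ t := by positivity
  have ht1 : t ≤ 1 := (div_le_one hu).mpr hhu
  have hut : u + h = u * (1 + t) := by rw [ht]; field_simp
  have hvt : v + h ≤ v * (1 + t) := by
    have : h = u * t := by rw [ht]; field_simp
    nlinarith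
  have hq1 : 1 ≤ v / u := (one_le_div hu).mpr huv
  have hpow : (v / u) ^ (k - l) ≤ (1 + t) ^ (k + l) := by
    have h1 : v ^ k * u ^ l ≤ (u * (1 + t)) ^ k * (v * (1 + t)) ^ l := by
      rw [hut] at hle
      refine hle.trans ?_
      gcongr
    obtain ⟨d, rfl⟩ : ∃ d, k = l + d := ⟨k - l, by omega⟩
    have hd : l + d - l = d := by omega
    rw [hd, div_pow, div_le_iff₀ (by positivity)]
    have h2 : 0 < v ^ l * u ^ l := by positivity
    refine le_of_mul_le_mul_left ?_ h2
    calc v ^ l * u ^ l * v ^ d = v ^ (l + d) * u ^ l := by ring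
      _ ≤ (u * (1 + t)) ^ (l + d) * (v * (1 + t)) ^ l := h1
      _ = v ^ l * u ^ l * ((1 + t) ^ (l + d + l) * u ^ d) := by
        rw [mul_pow, mul_pow]
        ring
  have h3 : v / u ≤ 1 + (2 ^ (k + l) - 1) * t :=
    calc v / u ≤ (v / u) ^ (k - l) := le_self_pow₀ hq1 (by omega)
      _ ≤ _ := hpow
      _ ≤ _ := one_add_pow_le_of_le_one ht0 ht1 _
  rw [div_le_iff₀ hu] at h3
  have h4 : (1 + (2 ^ (k + l) - 1) * t) * u = u + 2 ^ (k + l) * h - h := by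
    rw [ht]
    field_simp
    ring
  linarith

/-- The box with `k` variables in the interval of length `h` after the first starting point and
`l` variables in the one after the second. -/
def intervalBox (k l h x x' : ℕ) : Fin k ⊕ Fin l → Finset ℕ :=
  Sum.elim (fun _ => Finset.Ioc x (x + h)) fun _ => Finset.Ioc x' (x' + h)

open Finset in
/-- The number of solutions of `∏ a = ∏ b` with `a` in the box of two starting points and
`b` in the box of the same points swapped. -/
def intervalCount (k l h x x' : ℕ) : ℕ :=
  ∑ a ∈ Fintype.piFinset (intervalBox k l h x x'),
    #{b ∈ Fintype.piFinset (intervalBox k l h x' x) | ∏ i, a i = ∏ i, b i}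

open Finset in
/-- A short interval sum of a power of the divisor function. -/
def divisorSum (r h x : ℕ) : ℝ := ∑ n ∈ Ioc x (x + h), (#n.divisors : ℝ) ^ r

lemma divisorSum_nonneg (r h x : ℕ) : 0 ≤ divisorSum r h x :=
  Finset.sum_nonneg fun _ _ => by positivity

lemma ne_zero_of_mem_intervalBox {k l h x x' n : ℕ} {i : Fin k ⊕ Fin l}
    (hn : n ∈ intervalBox k l h x x' i) : n ≠ 0 := by
  rcases i with i | i <;> simp [intervalBox] at hn <;> omega

lemma le_of_mem_intervalBox {k l h x x' X n : ℕ} (hx : x ≤ X) (hx' : x' ≤ X)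
    {i : Fin k ⊕ Fin l} (hn : n ∈ intervalBox k l h x x' i) : n ≤ X + h := by
  rcases i with i | i <;> simp [intervalBox] at hn <;> omega

open Finset in
lemma intervalCount_le (k l h x x' : ℕ) :
    (intervalCount k l h x x' : ℝ)
      ≤ divisorSum (k + l) h x ^ k * divisorSum (k + l) h x' ^ l := by
  have h1 := sum_card_prod_eq_prod_le (intervalBox k l h x x') (intervalBox k l h x' x)
    fun i n hn => ne_zero_of_mem_intervalBox hn
  refine (Nat.cast_le.mpr h1).trans (le_of_eq ?_)
  simp [intervalBox, divisorSum, Fintype.prod_sum_type]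

open Finset in
lemma prod_mem_intervalBox {k l h u v : ℕ} {a : Fin k ⊕ Fin l → ℕ}
    (ha : a ∈ Fintype.piFinset (intervalBox k l h u v)) :
    u ^ k * v ^ l ≤ ∏ i, a i ∧ ∏ i, a i ≤ (u + h) ^ k * (v + h) ^ l := by
  rw [Fintype.mem_piFinset] at ha
  have h1 : ∀ i, u ≤ a (Sum.inl i) ∧ a (Sum.inl i) ≤ u + h := fun i => by
    have := ha (Sum.inl i)
    simp only [intervalBox, Sum.elim_inl, mem_Ioc] at this
    omega
  have h2 : ∀ i, v ≤ a (Sum.inr i) ∧ a (Sum.inr i) ≤ v + h := fun i => by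
    have := ha (Sum.inr i)
    simp only [intervalBox, Sum.elim_inr, mem_Ioc] at this
    omega
  rw [Fintype.prod_sum_type]
  constructor
  · refine Nat.mul_le_mul ?_ ?_
    · simpa using prod_le_prod' (s := univ) fun i _ => (h1 i).1
    · simpa using prod_le_prod' (s := univ) fun i _ => (h2 i).1
  · refine Nat.mul_le_mul ?_ ?_
    · simpa using prod_le_prod' (s := univ) fun i _ => (h1 i).2
    · simpa using prod_le_prod' (s := univ) fun i _ => (h2 i).2

/-- The pairs of starting points which can contribute to the second moment. -/
def NearPair (C h x x' : ℕ) : Prop :=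
  x < h ∨ x' < h ∨ (x ≤ x' + C * h ∧ x' ≤ x + C * h)

lemma nearPair_comm {C h x x' : ℕ} : NearPair C h x x' ↔ NearPair C h x' x := by
  unfold NearPair
  tauto

lemma nearPair_of_intervalCount_ne_zero {k l h x x' : ℕ} (hlk : l < k) (hh : 0 < h)
    (hne : intervalCount k l h x x' ≠ 0) : NearPair (2 ^ (k + l)) h x x' := by
  by_cases hx : x < h
  · exact Or.inl hx
  by_cases hx' : x' < h
  · exact Or.inr (Or.inl hx')
  obtain ⟨a, ha, hane⟩ := Finset.exists_ne_zero_of_sum_ne_zero hne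
  obtain ⟨b, hb⟩ := Finset.card_ne_zero.mp hane
  rw [Finset.mem_filter] at hb
  have hA := prod_mem_intervalBox ha
  have hB := prod_mem_intervalBox hb.1
  rw [← hb.2] at hB
  have key : ∀ u v : ℕ, h ≤ u → v ^ k * u ^ l ≤ (u + h) ^ k * (v + h) ^ l →
      v ≤ u + 2 ^ (k + l) * h := by
    intro u v hu huv
    have := le_add_of_pow_mul_pow_le (u := u) (v := v) (h := h) hlk (Nat.cast_nonneg h)
      (by exact_mod_cast hh.trans_le hu) (by exact_mod_cast hu) (by exact_mod_cast huv)
    exact_mod_cast this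
  exact Or.inr (Or.inr ⟨key x' x (not_lt.mp hx') (hA.1.trans hB.2),
    key x x' (not_lt.mp hx) (hB.1.trans hA.2)⟩)

lemma pow_mul_pow_le_add {a b : ℝ} (ha : 0 ≤ a) (hb : 0 ≤ b) (k l : ℕ) :
    a ^ k * b ^ l ≤ a ^ (k + l) + b ^ (k + l) := by
  rcases le_total a b with hab | hab
  · calc a ^ k * b ^ l ≤ b ^ k * b ^ l := by gcongr
      _ = b ^ (k + l) := (pow_add _ _ _).symm
      _ ≤ _ := le_add_of_nonneg_left (by positivity)
  · calc a ^ k * b ^ l ≤ a ^ k * a ^ l := by gcongr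
      _ = a ^ (k + l) := (pow_add _ _ _).symm
      _ ≤ _ := le_add_of_nonneg_right (by positivity)

open Finset in
lemma sum_divisorSum_pow_le {r : ℕ} (hr : r ≠ 0) (h M : ℕ) :
    ∑ x ∈ Icc 1 M, divisorSum r h x ^ r
      ≤ h ^ r * (((M + h : ℕ) : ℝ) * (1 + Real.log (M + h : ℕ)) ^ 2 ^ r ^ 2) := by
  obtain ⟨s, rfl⟩ := Nat.exists_eq_succ_of_ne_zero hr
  rw [Nat.succ_eq_add_one]
  set F : ℝ := ∑ n ∈ Icc 1 (M + h), (#n.divisors : ℝ) ^ (s + 1) ^ 2 with hF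
  have hpt : ∀ x, divisorSum (s + 1) h x ^ (s + 1)
      ≤ h ^ s * ∑ j ∈ Ioc 0 h, (#(x + j).divisors : ℝ) ^ (s + 1) ^ 2 := by
    intro x
    have hshift : divisorSum (s + 1) h x
        = ∑ j ∈ Ioc 0 h, (#(x + j).divisors : ℝ) ^ (s + 1) := by
      rw [divisorSum, ← sum_image (s := Ioc 0 h) (g := fun j => x + j)
        (f := fun n => (#n.divisors : ℝ) ^ (s + 1)) (by simp), image_add_left_Ioc, add_zero]
    have hjensen := pow_sum_le_card_mul_sum_pow (s := Ioc 0 h)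
      (f := fun j => (#(x + j).divisors : ℝ) ^ (s + 1)) (fun _ _ => by positivity) s
    simpa [hshift, ← pow_mul, sq] using hjensen
  calc ∑ x ∈ Icc 1 M, divisorSum (s + 1) h x ^ (s + 1)
      ≤ ∑ x ∈ Icc 1 M, (h : ℝ) ^ s * ∑ j ∈ Ioc 0 h, (#(x + j).divisors : ℝ) ^ (s + 1) ^ 2 :=
        sum_le_sum fun x _ => hpt x
    _ = h ^ s * ∑ j ∈ Ioc 0 h, ∑ x ∈ Icc 1 M, (#(x + j).divisors : ℝ) ^ (s + 1) ^ 2 := by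
        rw [← mul_sum, sum_comm]
    _ ≤ h ^ s * ∑ j ∈ Ioc 0 h, F := by
        gcongr with j hj
        rw [mem_Ioc] at hj
        rw [← sum_image (s := Icc 1 M) (g := fun x => x + j)
          (f := fun n => (#n.divisors : ℝ) ^ (s + 1) ^ 2) (by simp)]
        refine sum_le_sum_of_subset_of_nonneg ?_ fun n _ _ => by positivity
        intro n hn
        simp only [mem_image, mem_Icc] at hn ⊢
        omega
    _ = h ^ (s + 1) * F := by
        rw [sum_const, Nat.card_Ioc, nsmul_eq_mul, Nat.sub_zero]
        ring
    _ ≤ _ := by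
        gcongr
        exact sum_card_divisors_pow_le _ _

open Finset Classical in
lemma card_nearPair_le {C h x : ℕ} (hh : 0 < h) (hx : h ≤ x) (X : ℕ) :
    #{x' ∈ Icc 1 X | NearPair C h x x'} ≤ (2 * C + 2) * h := by
  have hsub : {x' ∈ Icc 1 X | NearPair C h x x'} ⊆
      range h ∪ Icc (x - C * h) (x + C * h) := by
    intro x' hx'
    rw [mem_filter] at hx'
    rw [mem_union, mem_range, mem_Icc]
    rcases hx'.2 with h1 | h1 | h1
    · omega
    · exact Or.inl h1
    · exact Or.inr (by omega)
  refine (card_le_card hsub).trans ((card_union_le _ _).trans ?_)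
  rw [card_range, Nat.card_Icc]
  have : (2 * C + 2) * h = 2 * (C * h) + 2 * h := by ring
  omega

open Finset in
/-- The total number of solutions over all pairs of starting points. -/
lemma sum_intervalCount_le {k l h X : ℕ} (hlk : l < k) (hh : 0 < h) (hX : h ≤ X) :
    ∑ x ∈ Icc 1 X, ∑ x' ∈ Icc 1 X, (intervalCount k l h x x' : ℝ)
      ≤ (2 ^ (k + l + 3) + 12) * h ^ (k + l + 1) * X *
        (1 + Real.log (2 * X)) ^ 2 ^ (k + l) ^ 2 := by
  classical
  set r := k + l with hr
  have hr0 : r ≠ 0 := by omega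
  set C := 2 ^ r with hC
  set G : ℕ → ℝ := fun x => divisorSum r h x ^ r with hG
  have hG0 : ∀ x, 0 ≤ G x := fun x => pow_nonneg (divisorSum_nonneg _ _ _) _
  have hX0 : (0 : ℝ) < X := by exact_mod_cast hh.trans_le hX
  have hhX : (h : ℝ) ≤ X := by exact_mod_cast hX
  have hh0 : (0 : ℝ) < h := by exact_mod_cast hh
  set L : ℝ := (1 + Real.log (2 * X)) ^ 2 ^ r ^ 2 with hL
  have hmom : ∀ M, 0 < M → M ≤ X → ∑ x ∈ Icc 1 M, G x ≤ h ^ r * ((M + h) * L) := by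
    intro M hM hMX
    refine (sum_divisorSum_pow_le hr0 h M).trans ?_
    have h1 : ((M + h : ℕ) : ℝ) ≤ 2 * X := by
      have : (M : ℝ) ≤ X := by exact_mod_cast hMX
      push_cast
      linarith
    have h2 : (1 : ℝ) ≤ ((M + h : ℕ) : ℝ) := by exact_mod_cast (by omega : 1 ≤ M + h)
    have h3 : 0 ≤ Real.log ((M + h : ℕ) : ℝ) := Real.log_nonneg h2
    rw [hL]
    have h4 : Real.log ((M + h : ℕ) : ℝ) ≤ Real.log (2 * X) := by gcongr
    push_cast at h3 h4 ⊢
    gcongr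
  have hpair : ∀ x x', (intervalCount k l h x x' : ℝ)
      ≤ (if NearPair C h x x' then G x else 0) + if NearPair C h x' x then G x' else 0 := by
    intro x x'
    by_cases hN : NearPair C h x x'
    · rw [if_pos hN, if_pos (nearPair_comm.mp hN)]
      exact (intervalCount_le k l h x x').trans
        (pow_mul_pow_le_add (divisorSum_nonneg _ _ _) (divisorSum_nonneg _ _ _) k l)
    · have : intervalCount k l h x x' = 0 := by
        by_contra hne
        exact hN (nearPair_of_intervalCount_ne_zero hlk hh hne)
      rw [if_neg hN, if_neg (mt nearPair_comm.mp hN), this]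
      simp
  have hone : ∑ x ∈ Icc 1 X, ∑ x' ∈ Icc 1 X, (if NearPair C h x x' then G x else 0)
      ≤ (2 * C + 2) * h * (h ^ r * ((X + h) * L)) + X * (h ^ r * ((h + h) * L)) := by
    calc ∑ x ∈ Icc 1 X, ∑ x' ∈ Icc 1 X, (if NearPair C h x x' then G x else 0)
        = ∑ x ∈ Icc 1 X, (#{x' ∈ Icc 1 X | NearPair C h x x'} : ℝ) * G x := by
          refine sum_congr rfl fun x _ => ?_
          rw [← sum_filter, sum_const, nsmul_eq_mul]
      _ ≤ ∑ x ∈ Icc 1 X, ((2 * C + 2) * h * G x + X * if x ≤ h then G x else 0) := by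
          refine sum_le_sum fun x _ => ?_
          rcases le_or_gt h x with hx | hx
          · have h1 : (#{x' ∈ Icc 1 X | NearPair C h x x'} : ℝ) ≤ (2 * C + 2) * h := by
              exact_mod_cast card_nearPair_le hh hx X
            refine (mul_le_mul_of_nonneg_right h1 (hG0 x)).trans (le_add_of_nonneg_right ?_)
            have := hG0 x
            split_ifs <;> positivity
          · have h1 : (#{x' ∈ Icc 1 X | NearPair C h x x'} : ℝ) ≤ X := by
              exact_mod_cast (card_filter_le _ _).trans (by simp)
            rw [if_pos hx.le]
            refine (mul_le_mul_of_nonneg_right h1 (hG0 x)).trans (le_add_of_nonneg_left ?_)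
            have := hG0 x
            positivity
      _ = (2 * C + 2) * h * ∑ x ∈ Icc 1 X, G x + X * ∑ x ∈ Icc 1 h, G x := by
          rw [sum_add_distrib, ← mul_sum, ← mul_sum, ← sum_filter]
          congr 3
          ext x
          simp only [mem_filter, mem_Icc]
          omega
      _ ≤ _ := by
          gcongr
          · exact hmom X (hh.trans_le hX) le_rfl
          · exact hmom h hh hX
  have hL0 : 0 ≤ L := by
    have : (0 : ℝ) ≤ Real.log (2 * X) := Real.log_nonneg (by
      have : (1 : ℝ) ≤ X := by exact_mod_cast hh.trans_le hX
      linarith)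
    positivity
  calc ∑ x ∈ Icc 1 X, ∑ x' ∈ Icc 1 X, (intervalCount k l h x x' : ℝ)
      ≤ ∑ x ∈ Icc 1 X, ∑ x' ∈ Icc 1 X, ((if NearPair C h x x' then G x else 0) +
          if NearPair C h x' x then G x' else 0) :=
        sum_le_sum fun x _ => sum_le_sum fun x' _ => hpair x x'
    _ = 2 * ∑ x ∈ Icc 1 X, ∑ x' ∈ Icc 1 X, (if NearPair C h x x' then G x else 0) := by
        simp only [sum_add_distrib]
        rw [sum_comm (f := fun x x' => if NearPair C h x' x then G x' else 0)]
        ring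
    _ ≤ 2 * ((2 * C + 2) * h * (h ^ r * ((X + X) * L)) + X * (h ^ r * ((h + h) * L))) := by
        refine mul_le_mul_of_nonneg_left (hone.trans ?_) zero_le_two
        gcongr
    _ = _ := by
        rw [hC]
        push_cast
        ring

open Finset in
/-- The second moment equals the normalized count of solutions. -/
lemma integral_norm_sq_eq (X k l : ℕ) (H : ℕ → ℕ) :
    ∫ ω, ‖((X : ℂ))⁻¹ * ∑ x ∈ Icc 1 X,
        (AHf X H ω x) ^ k * (starRingEnd ℂ (AHf X H ω x)) ^ l‖ ^ 2 ∂(steinhausMeasure (X + H X))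
      = ((X : ℝ) ^ 2)⁻¹ * ((H X : ℝ) ^ (k + l))⁻¹ *
        ∑ x ∈ Icc 1 X, ∑ x' ∈ Icc 1 X, (intervalCount k l (H X) x x' : ℝ) := by
  set h := H X with hh
  set y := X + h with hy
  let S : (Fin (y + 1) → ℝ) → ℕ → ℂ := fun ω x => ∑ n ∈ Ioc x (x + h), steinhausF y ω n
  have hnorm : ∀ ω : Fin (y + 1) → ℝ, ‖((X : ℂ))⁻¹ * ∑ x ∈ Icc 1 X,
      (AHf X H ω x) ^ k * (starRingEnd ℂ (AHf X H ω x)) ^ l‖ ^ 2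
      = ((X : ℝ) ^ 2)⁻¹ * ((h : ℝ) ^ (k + l))⁻¹ *
        ‖∑ x ∈ Icc 1 X, S ω x ^ k * starRingEnd ℂ (S ω x) ^ l‖ ^ 2 := by
    intro ω
    have h1 : ∑ x ∈ Icc 1 X, (AHf X H ω x) ^ k * (starRingEnd ℂ (AHf X H ω x)) ^ l
        = ((Real.sqrt h : ℂ))⁻¹ ^ (k + l) *
          ∑ x ∈ Icc 1 X, S ω x ^ k * starRingEnd ℂ (S ω x) ^ l := by
      rw [mul_sum]
      refine sum_congr rfl fun x _ => ?_
      have : AHf X H ω x = ((Real.sqrt h : ℂ))⁻¹ * S ω x := rfl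
      rw [this, map_mul, map_inv₀, Complex.conj_ofReal]
      ring
    rw [h1]
    simp only [norm_mul, norm_inv, norm_pow, Complex.norm_natCast, Complex.norm_real,
      Real.norm_eq_abs, abs_of_nonneg (Real.sqrt_nonneg _), mul_pow]
    rw [← pow_mul, mul_comm (k + l) 2, pow_mul, inv_pow (Real.sqrt h) 2,
      Real.sq_sqrt (Nat.cast_nonneg h), inv_pow, inv_pow]
    ring
  have hprod : ∀ (ω : Fin (y + 1) → ℝ) (x x' : ℕ),
      (S ω x ^ k * starRingEnd ℂ (S ω x) ^ l) *
        starRingEnd ℂ (S ω x' ^ k * starRingEnd ℂ (S ω x') ^ l)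
      = (∏ i, ∑ n ∈ intervalBox k l h x x' i, steinhausF y ω n) *
        starRingEnd ℂ (∏ i, ∑ n ∈ intervalBox k l h x' x i, steinhausF y ω n) := by
    intro ω x x'
    simp only [Fintype.prod_sum_type, intervalBox, Sum.elim_inl, Sum.elim_inr, prod_const,
      card_univ, Fintype.card_fin, map_mul, map_pow, Complex.conj_conj, S]
    ring
  have hcount : ∀ x ∈ Icc 1 X, ∀ x' ∈ Icc 1 X, _ := fun x hx x' hx' =>
    integral_prod_sum_mul_conj (y := y) (intervalBox k l h x x') (intervalBox k l h x' x)
      (fun i n hn => ⟨ne_zero_of_mem_intervalBox hn,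
        le_of_mem_intervalBox (mem_Icc.mp hx).2 (mem_Icc.mp hx').2 hn⟩)
      (fun i n hn => ⟨ne_zero_of_mem_intervalBox hn,
        le_of_mem_intervalBox (mem_Icc.mp hx').2 (mem_Icc.mp hx).2 hn⟩)
  have hmain : ∫ ω, ‖∑ x ∈ Icc 1 X, S ω x ^ k * starRingEnd ℂ (S ω x) ^ l‖ ^ 2
      ∂(steinhausMeasure y)
      = ∑ x ∈ Icc 1 X, ∑ x' ∈ Icc 1 X, (intervalCount k l h x x' : ℝ) := by
    apply Complex.ofReal_injective
    rw [← integral_complex_ofReal]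
    have hsq : ∀ ω : Fin (y + 1) → ℝ,
        ((‖∑ x ∈ Icc 1 X, S ω x ^ k * starRingEnd ℂ (S ω x) ^ l‖ ^ 2 : ℝ) : ℂ)
        = ∑ x ∈ Icc 1 X, ∑ x' ∈ Icc 1 X,
          (∏ i, ∑ n ∈ intervalBox k l h x x' i, steinhausF y ω n) *
          starRingEnd ℂ (∏ i, ∑ n ∈ intervalBox k l h x' x i, steinhausF y ω n) := by
      intro ω
      rw [Complex.ofReal_pow, ← Complex.mul_conj', map_sum, sum_mul_sum]
      exact sum_congr rfl fun x _ => sum_congr rfl fun x' _ => hprod ω x x'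
    simp only [hsq]
    rw [integral_finsetSum _ fun x hx =>
      integrable_finsetSum _ fun x' hx' => (hcount x hx x' hx').1]
    push_cast
    refine sum_congr rfl fun x hx => ?_
    rw [integral_finsetSum _ fun x' hx' => (hcount x hx x' hx').1]
    refine sum_congr rfl fun x' hx' => ?_
    rw [(hcount x hx x' hx').2, intervalCount]
  simp only [hnorm]
  rw [integral_const_mul, hmain]

open Filter in
/-- for all integers `k > ℓ ≥ 1` there is `c_{k,ℓ} > 0` such that for
every `H : ℕ → ℕ` with `H(X) → ∞` and `H(X) ≤ X·(log X)^{−c_{k,ℓ}}` for all large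
`X`, `𝔼_f |(1/X) ∑_{x=1}^{X} A_H(f,x)^k · conj(A_H(f,x))^ℓ|² → 0` as `X → ∞`. -/
theorem stmt3 (k l : ℕ) (hl : 1 ≤ l) (hkl : l < k) :
    ∃ c : ℝ, 0 < c ∧ ∀ H : ℕ → ℕ,
      Filter.Tendsto H Filter.atTop Filter.atTop →
      (∀ᶠ X in Filter.atTop, (H X : ℝ) ≤ (X : ℝ) * Real.log X ^ (-c)) →
      Filter.Tendsto (fun X : ℕ =>
        ∫ ω, ‖((X : ℂ))⁻¹ * ∑ x ∈ Finset.Icc 1 X,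
            (AHf X H ω x) ^ k * (starRingEnd ℂ (AHf X H ω x)) ^ l‖ ^ 2
          ∂(steinhausMeasure (X + H X)))
        Filter.atTop (nhds 0) := by
  set E : ℕ := 2 ^ (k + l) ^ 2 with hE
  refine ⟨((E + 1 : ℕ) : ℝ), by positivity, fun H hH hle => ?_⟩
  set K : ℝ := (2 ^ (k + l + 3) + 12) * 3 ^ E with hK
  have hlog : Tendsto (fun X : ℕ => Real.log X) atTop atTop :=
    Real.tendsto_log_atTop.comp tendsto_natCast_atTop_atTop
  have hlim : Tendsto (fun X : ℕ => K * (Real.log X)⁻¹) atTop (nhds 0) := by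
    simpa using (tendsto_inv_atTop_zero.comp hlog).const_mul K
  refine squeeze_zero' (Eventually.of_forall fun X => integral_nonneg fun ω => by positivity)
    ?_ hlim
  filter_upwards [hle, hH.eventually_ge_atTop 1, hlog.eventually_ge_atTop 1,
    eventually_ge_atTop 1] with X hX hH1 hlog1 hX1
  rw [integral_norm_sq_eq]
  have hX0 : (0 : ℝ) < X := by exact_mod_cast hX1
  have hH0 : (0 : ℝ) < H X := by exact_mod_cast hH1
  have hlog0 : 0 < Real.log X := by linarith
  rw [Real.rpow_neg hlog0.le, Real.rpow_natCast] at hX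
  have hHX : H X ≤ X := by
    have : (H X : ℝ) ≤ X := hX.trans
      (mul_le_of_le_one_right hX0.le (inv_le_one_of_one_le₀ (one_le_pow₀ hlog1)))
    exact_mod_cast this
  have hL : 1 + Real.log (2 * X) ≤ 3 * Real.log X := by
    rw [Real.log_mul two_ne_zero hX0.ne']
    have := Real.log_two_lt_d9
    linarith
  have hL0 : 0 ≤ 1 + Real.log (2 * X) := by
    rw [Real.log_mul two_ne_zero hX0.ne']
    have := Real.log_two_gt_d9
    linarith
  calc ((X : ℝ) ^ 2)⁻¹ * ((H X : ℝ) ^ (k + l))⁻¹ *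
        ∑ x ∈ Finset.Icc 1 X, ∑ x' ∈ Finset.Icc 1 X, (intervalCount k l (H X) x x' : ℝ)
      ≤ ((X : ℝ) ^ 2)⁻¹ * ((H X : ℝ) ^ (k + l))⁻¹ *
        ((2 ^ (k + l + 3) + 12) * H X ^ (k + l + 1) * X * (3 * Real.log X) ^ E) := by
        refine mul_le_mul_of_nonneg_left ((sum_intervalCount_le hkl hH1 hHX).trans ?_)
          (by positivity)
        gcongr
    _ = K * Real.log X ^ E * ((X : ℝ)⁻¹ * H X) := by
        rw [hK]
        field_simp
        ring
    _ ≤ K * Real.log X ^ E * ((X : ℝ)⁻¹ * (X * (Real.log X ^ (E + 1))⁻¹)) := by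
        gcongr
    _ = K * (Real.log X)⁻¹ := by
        field_simp
        ring
end

section
/- For every integer k ≥ 2 there exists a constant C_k > 0 such that for all integers V₁, U₂, q ≥ 1 with q ≤ U₂^{k−2} and every sign ε₁ ∈ {−1, 1}: ∑ τ_k(u₂)·τ_k(ε₁v₁ + u₂q) ≤ C_k · V₁U₂ · (1 + log(V₁U₂))^{3k}, where the sum runs over integers u₂ with U₂ ≤ u₂ < 2U₂ and integers v₁ with 1 ≤ v₁ ≤ V₁, and log denotes the natural logarithm. -/
/-- `τ_k(m)` for `m : ℤ`: the number of `k`-tuples of positive integers with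
product `m`; in particular `τ_k(m) = 0` for `m ≤ 0`. -/
noncomputable def tauInt (k : ℕ) (m : ℤ) : ℕ :=
  Nat.card {d : Fin k → ℤ // (∀ i, 0 < d i) ∧ ∏ i, d i = m}

/-- The number of ordered factorizations of `n` into `k` positive factors. -/
def tauNat (k n : ℕ) : ℕ := (Nat.finMulAntidiag k n).card

lemma tauInt_natCast (k : ℕ) {n : ℕ} (hn : n ≠ 0) : tauInt k (n : ℤ) = tauNat k n := by
  unfold tauInt tauNat
  rw [← Fintype.card_coe, ← Nat.card_eq_fintype_card]
  refine Nat.card_congr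
    { toFun := fun d => ⟨fun i => (d.1 i).toNat, ?_⟩
      invFun := fun t => ⟨fun i => (t.1 i : ℤ), ?_⟩
      left_inv := ?_
      right_inv := ?_ }
  · rw [Nat.mem_finMulAntidiag]
    refine ⟨?_, hn⟩
    have h := d.2.2
    zify
    refine Eq.trans ?_ h
    exact Finset.prod_congr rfl fun i _ => by simpa using (d.2.1 i).le
  · refine ⟨fun i => ?_, ?_⟩ <;> beta_reduce
    · exact_mod_cast Nat.pos_of_ne_zero (Nat.ne_zero_of_mem_finMulAntidiag t.2 i)
    · exact_mod_cast Nat.prod_eq_of_mem_finMulAntidiag t.2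
  · intro d
    apply Subtype.ext
    funext i
    simpa using (d.2.1 i).le
  · intro t
    apply Subtype.ext
    funext i
    simp

lemma tauInt_eq_zero (k : ℕ) {m : ℤ} (hm : m ≤ 0) : tauInt k m = 0 := by
  unfold tauInt
  rw [Nat.card_eq_zero]
  left
  refine ⟨fun ⟨d, hd, h⟩ => ?_⟩
  have : 0 < ∏ i, d i := Finset.prod_pos fun i _ => hd i
  omega

lemma tauNat_mul_prime_le (k : ℕ) {m p : ℕ} (hm : m ≠ 0) (hp : p.Prime) :
    tauNat k (m * p) ≤ k * tauNat k m := by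
  classical
  unfold tauNat
  have hsub : Nat.finMulAntidiag k (m * p) ⊆ Finset.univ.biUnion fun i : Fin k =>
      (Nat.finMulAntidiag k m).image fun t => Function.update t i (t i * p) := by
    intro t ht
    rw [Nat.mem_finMulAntidiag] at ht
    obtain ⟨i, -, hi⟩ := (hp.prime.dvd_finsetProd_iff _).1 (ht.1 ▸ Dvd.intro_left m rfl)
    obtain ⟨c, hc⟩ := hi
    simp only [Finset.mem_biUnion, Finset.mem_univ, true_and, Finset.mem_image]
    refine ⟨i, Function.update t i c, ?_, ?_⟩
    · rw [Nat.mem_finMulAntidiag]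
      refine ⟨?_, hm⟩
      have h1 := ht.1
      rw [← Finset.mul_prod_erase _ _ (Finset.mem_univ i), hc] at h1
      rw [← Finset.mul_prod_erase _ _ (Finset.mem_univ i), Function.update_self,
        Finset.prod_congr rfl fun j hj =>
          Function.update_of_ne (Finset.ne_of_mem_erase hj) c t]
      apply Nat.eq_of_mul_eq_mul_right hp.pos
      rw [← h1]; ring
    · rw [Function.update_self, Function.update_idem, mul_comm, ← hc, Function.update_eq_self]
  refine (Finset.card_le_card hsub).trans (Finset.card_biUnion_le.trans ?_)
  calc _ ≤ ∑ i : Fin k, (Nat.finMulAntidiag k m).card :=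
        Finset.sum_le_sum fun i _ => Finset.card_image_le
    _ = _ := by simp

lemma tauNat_mul_le_pow (k : ℕ) (hk : 1 ≤ k) {a p : ℕ} (ha : a ≠ 0) (r : ℕ) :
    ∀ b : ℕ, b ≠ 0 → (∀ q : ℕ, q.Prime → q ∣ b → p ≤ q) → b < p ^ r →
      tauNat k (a * b) ≤ k ^ r * tauNat k a := by
  induction r with
  | zero => intro b hb _ h; simp at h; omega
  | succ r ih =>
    intro b hb hq hlt
    by_cases hb1 : b = 1
    · subst hb1
      rw [mul_one]
      exact Nat.le_mul_of_pos_left _ (pow_pos hk _)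
    · have hpr := Nat.minFac_prime hb1
      obtain ⟨c, hc⟩ := Nat.minFac_dvd b
      set q := b.minFac with hqdef
      have hpq := hq q hpr (Nat.minFac_dvd b)
      have hc0 : c ≠ 0 := by rintro rfl; simp at hc; exact hb hc
      have hclt : c < p ^ r := by
        by_contra! hcon
        have : p ^ r * p ≤ c * q := Nat.mul_le_mul hcon hpq
        rw [pow_succ] at hlt
        have : b = c * q := by rw [hc]; ring
        omega
      have h1 := ih c hc0 (fun l hl hlc => hq l hl (hc ▸ hlc.mul_left _)) hclt
      have h2 := tauNat_mul_prime_le k (m := a * c) (mul_ne_zero ha hc0) hpr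
      calc tauNat k (a * b) = tauNat k (a * c * q) := by rw [mul_assoc, mul_comm c, ← hc]
        _ ≤ k * tauNat k (a * c) := h2
        _ ≤ k * (k ^ r * tauNat k a) := Nat.mul_le_mul_left _ h1
        _ = _ := by ring

/-- Moments of `tauNat k` over `D` are bounded by the `k`-th power of a sum over the divisors. -/
lemma sum_tauNat_mul_rpow_le (k : ℕ) (s : ℝ) (D T : Finset ℕ) (hD : ∀ d ∈ D, ∀ m, m ∣ d → m ∈ T) :
    ∑ d ∈ D, (tauNat k d : ℝ) * (d : ℝ) ^ s ≤ (∑ m ∈ T, (m : ℝ) ^ s) ^ k := by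
  classical
  have h1 : (∑ m ∈ T, (m : ℝ) ^ s) ^ k =
      ∑ x ∈ Fintype.piFinset (fun _ : Fin k => T), ∏ i, (x i : ℝ) ^ s := by
    rw [← Finset.prod_univ_sum (fun _ : Fin k => T) (fun _ (m : ℕ) => (m : ℝ) ^ s)]
    simp
  have h2 : ∀ d ∈ D, (tauNat k d : ℝ) * (d : ℝ) ^ s =
      ∑ x ∈ Nat.finMulAntidiag k d, ∏ i, (x i : ℝ) ^ s := by
    intro d hd
    rw [tauNat, ← nsmul_eq_mul, ← Finset.sum_const]
    refine Finset.sum_congr rfl fun x hx => ?_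
    rw [Real.finsetProd_rpow _ _ (fun i _ => Nat.cast_nonneg _), ← Nat.cast_prod,
      Nat.prod_eq_of_mem_finMulAntidiag hx]
  rw [h1, Finset.sum_congr rfl h2, ← Finset.sum_biUnion]
  · refine Finset.sum_le_sum_of_subset_of_nonneg ?_ fun x _ _ =>
      Finset.prod_nonneg fun i _ => Real.rpow_nonneg (Nat.cast_nonneg _) _
    intro x hx
    rw [Finset.mem_biUnion] at hx
    obtain ⟨d, hd, hx⟩ := hx
    rw [Fintype.mem_piFinset]
    exact fun i => hD d hd _ (Nat.dvd_of_mem_finMulAntidiag hx i)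
  · intro d _ e _ hde
    rw [Function.onFun, Finset.disjoint_left]
    intro x hx hx'
    exact hde ((Nat.prod_eq_of_mem_finMulAntidiag hx).symm.trans
      (Nat.prod_eq_of_mem_finMulAntidiag hx'))

/-- The monoid homomorphism `n ↦ n ^ s`. -/
noncomputable def natRpowHom (s : ℝ) : ℕ →* ℝ where
  toFun n := (n : ℝ) ^ s
  map_one' := by simp
  map_mul' m n := by
    rw [Nat.cast_mul, Real.mul_rpow (Nat.cast_nonneg _) (Nat.cast_nonneg _)]

lemma hasSum_smoothNumbers_rpow {s : ℝ} (hs : s < 0) (N : ℕ) :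
    HasSum (fun m : N.smoothNumbers => ((m : ℕ) : ℝ) ^ s)
      (∏ p ∈ N.primesBelow, (1 - (p : ℝ) ^ s)⁻¹) := by
  have := (EulerProduct.summable_and_hasSum_smoothNumbers_prod_primesBelow_geometric
    (f := natRpowHom s) (fun {p} hp => by
      change ‖(p : ℝ) ^ s‖ < 1
      rw [Real.norm_of_nonneg (Real.rpow_nonneg (Nat.cast_nonneg _) _)]
      exact Real.rpow_lt_one_of_one_lt_of_neg (by exact_mod_cast hp.one_lt) hs) N).2
  exact this

lemma sum_smooth_rpow_le {s : ℝ} (hs : s < 0) (N : ℕ) (T : Finset ℕ)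
    (hT : ∀ m ∈ T, m ∈ N.smoothNumbers) :
    ∑ m ∈ T, (m : ℝ) ^ s ≤ ∏ p ∈ N.primesBelow, (1 - (p : ℝ) ^ s)⁻¹ := by
  have h := sum_le_hasSum (T.subtype (· ∈ N.smoothNumbers))
    (fun m _ => Real.rpow_nonneg (Nat.cast_nonneg _) _) (hasSum_smoothNumbers_rpow hs N)
  rwa [Finset.sum_subtype_of_mem (fun m : ℕ => (m : ℝ) ^ s) hT] at h

lemma sum_Icc_rpow_le {δ : ℝ} (hδ : 0 < δ) {N : ℕ} (hN : 1 ≤ N) :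
    ∑ n ∈ Finset.Icc 1 N, (n : ℝ) ^ (-1 - δ) ≤ 1 + 1 / δ - (N : ℝ) ^ (-δ) / δ := by
  induction N, hN using Nat.le_induction with
  | base => simp
  | succ N hN ih =>
    rw [Finset.sum_Icc_succ_top (by omega)]
    have hN0 : (0 : ℝ) < N := by exact_mod_cast hN
    have hx : (0 : ℝ) < (N : ℝ) + 1 := by positivity
    have hlog : Real.log (N : ℝ) ≤ Real.log ((N : ℝ) + 1) - 1 / ((N : ℝ) + 1) := by
      have := Real.log_le_sub_one_of_pos (div_pos hN0 hx)
      rw [Real.log_div hN0.ne' hx.ne'] at this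
      have e : (N : ℝ) / (N + 1) - 1 = - (1 / ((N : ℝ) + 1)) := by field_simp; ring
      linarith
    have key : ((N : ℝ) + 1) ^ (-δ) * (1 + δ / ((N : ℝ) + 1)) ≤ (N : ℝ) ^ (-δ) := by
      have h1 : 1 + δ / ((N : ℝ) + 1) ≤ Real.exp (δ / ((N : ℝ) + 1)) := by
        linarith [Real.add_one_le_exp (δ / ((N : ℝ) + 1))]
      calc _ ≤ ((N : ℝ) + 1) ^ (-δ) * Real.exp (δ / ((N : ℝ) + 1)) := by gcongr
        _ ≤ (N : ℝ) ^ (-δ) := by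
          rw [Real.rpow_def_of_pos hx, Real.rpow_def_of_pos hN0, ← Real.exp_add]
          apply Real.exp_le_exp.2
          have := mul_le_mul_of_nonneg_right hlog hδ.le
          have e : δ / ((N : ℝ) + 1) = 1 / ((N : ℝ) + 1) * δ := by ring
          linarith
    have e1 : ((N : ℝ) + 1) ^ (-1 - δ) = ((N : ℝ) + 1) ^ (-δ) / ((N : ℝ) + 1) := by
      rw [show -1 - δ = -δ - 1 by ring, Real.rpow_sub_one hx.ne']
    have : ((N : ℝ) + 1) ^ (-1 - δ) ≤ (N : ℝ) ^ (-δ) / δ - ((N : ℝ) + 1) ^ (-δ) / δ := by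
      rw [e1, ← sub_div, le_div_iff₀ hδ]
      have e2 : ((N : ℝ) + 1) ^ (-δ) * (1 + δ / ((N : ℝ) + 1)) =
        ((N : ℝ) + 1) ^ (-δ) + ((N : ℝ) + 1) ^ (-δ) / ((N : ℝ) + 1) * δ := by ring
      linarith
    push_cast
    linarith

lemma prod_primesBelow_le {δ : ℝ} (hδ : 0 < δ) (N : ℕ) :
    ∏ p ∈ N.primesBelow, (1 - (p : ℝ) ^ (-1 - δ))⁻¹ ≤ 1 + 1 / δ := by
  classical
  refine hasSum_le_of_sum_le (hasSum_smoothNumbers_rpow (by linarith) N) fun S => ?_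
  set M := (S.image Subtype.val).sup id + 1
  have hM : 1 ≤ M := by omega
  calc ∑ m ∈ S, ((m : ℕ) : ℝ) ^ (-1 - δ)
      = ∑ m ∈ S.image Subtype.val, (m : ℝ) ^ (-1 - δ) := by
        rw [Finset.sum_image (by intro a _ b _ h; exact Subtype.ext h)]
    _ ≤ ∑ m ∈ Finset.Icc 1 M, (m : ℝ) ^ (-1 - δ) := by
        refine Finset.sum_le_sum_of_subset_of_nonneg ?_ fun x _ _ =>
          Real.rpow_nonneg (Nat.cast_nonneg _) _
        intro m hm
        rw [Finset.mem_Icc]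
        refine ⟨?_, (Finset.le_sup (f := id) hm).trans (Nat.le_succ _)⟩
        obtain ⟨x, -, rfl⟩ := Finset.mem_image.1 hm
        exact Nat.pos_of_ne_zero x.2.1
    _ ≤ 1 + 1 / δ - (M : ℝ) ^ (-δ) / δ := sum_Icc_rpow_le hδ hM
    _ ≤ _ := by
        have : 0 ≤ (M : ℝ) ^ (-δ) / δ := by positivity
        linarith

lemma sum_log_div_prime_le {N : ℕ} (hN : 1 ≤ N) :
    ∑ p ∈ (N + 1).primesBelow, Real.log p / p ≤ 2 * Real.log N := by
  have h1 : ∑ p ∈ (N + 1).primesBelow, Real.log p * (N / p : ℕ) ≤ N * Real.log N := by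
    have h2 : ∀ n ∈ Finset.Icc 1 N, ∑ p ∈ (N + 1).primesBelow,
        (if p ∣ n then Real.log p else 0) ≤ Real.log N := by
      intro n hn
      rw [Finset.mem_Icc] at hn
      rw [← Finset.sum_filter, ← Real.log_prod (s := _) (f := fun p : ℕ => (p : ℝ))]
      · rw [← Nat.cast_prod]
        apply Real.log_le_log
        · exact_mod_cast Finset.prod_pos fun p hp =>
            (Nat.prime_of_mem_primesBelow (Finset.mem_filter.1 hp).1).pos
        · have : ∏ p ∈ (N + 1).primesBelow with p ∣ n, p ∣ n :=
            Finset.prod_primes_dvd n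
              (fun p hp => (Nat.prime_of_mem_primesBelow (Finset.mem_filter.1 hp).1).prime)
              (fun p hp => (Finset.mem_filter.1 hp).2)
          exact_mod_cast (Nat.le_of_dvd hn.1 this).trans hn.2
      · intro p hp
        exact_mod_cast (Nat.prime_of_mem_primesBelow (Finset.mem_filter.1 hp).1).ne_zero
    have h3 := Finset.sum_le_sum h2
    rw [Finset.sum_comm] at h3
    simp only [Finset.sum_const, Nat.card_Icc, nsmul_eq_mul, Nat.add_sub_cancel] at h3
    refine le_trans (le_of_eq ?_) h3
    refine Finset.sum_congr rfl fun p hp => ?_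
    rw [← Finset.sum_filter, Finset.sum_const, nsmul_eq_mul, mul_comm]
    congr 2
    rw [← Nat.Ioc_filter_dvd_card_eq_div]
    rfl
  have hN0 : (0 : ℝ) < N := by exact_mod_cast hN
  have h4 : ∑ p ∈ (N + 1).primesBelow, N / 2 * (Real.log p / p) ≤ N * Real.log N := by
    refine le_trans (Finset.sum_le_sum fun p hp => ?_) h1
    have hpp := Nat.prime_of_mem_primesBelow hp
    have hpN : p ≤ N := Nat.lt_succ_iff.1 (Nat.lt_of_mem_primesBelow hp)
    have hp0 : (0 : ℝ) < p := by exact_mod_cast hpp.pos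
    have hlog : 0 ≤ Real.log p := Real.log_natCast_nonneg p
    have : (N : ℝ) / (2 * p) ≤ (N / p : ℕ) := by
      rw [div_le_iff₀ (by positivity)]
      have h5 := Nat.div_add_mod N p
      have h6 := Nat.mod_lt N hpp.pos
      have h7 : 1 ≤ N / p := Nat.div_pos hpN hpp.pos
      have h8 : N ≤ N / p * (2 * p) := by nlinarith
      exact_mod_cast h8
    calc _ = Real.log p * (N / (2 * p)) := by field_simp
      _ ≤ _ := by gcongr
  rw [← Finset.mul_sum] at h4
  have : N / 2 * (∑ p ∈ (N + 1).primesBelow, Real.log p / p) ≤ N / 2 * (2 * Real.log N) := by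
    linarith
  exact le_of_mul_le_mul_left this (by positivity)

lemma exp_le_one_add_mul_exp {w A : ℝ} (h0 : 0 ≤ w) (h : w ≤ A) :
    Real.exp w ≤ 1 + w * Real.exp A := by
  have h1 := Real.add_one_le_exp (-w)
  have h2 := mul_le_mul_of_nonneg_right h1 (Real.exp_pos w).le
  rw [← Real.exp_add, neg_add_cancel, Real.exp_zero] at h2
  have h3 : w * Real.exp w ≤ w * Real.exp A := by gcongr
  linarith

lemma one_sub_inv_le_mul_exp {x x' : ℝ} (h' : x' ≤ x) (hx : x ≤ 3 / 4) :
    (1 - x)⁻¹ ≤ (1 - x')⁻¹ * Real.exp (4 * (x - x')) := by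
  have h1 : 0 < 1 - x := by linarith
  have h2 : 0 < 1 - x' := by linarith
  have h3 := Real.add_one_le_exp (4 * (x - x'))
  have h4 : 1 - x' ≤ (4 * (x - x') + 1) * (1 - x) := by nlinarith
  have h5 : (1 - x') ≤ Real.exp (4 * (x - x')) * (1 - x) :=
    h4.trans (mul_le_mul_of_nonneg_right h3 h1.le)
  rw [inv_mul_eq_div, inv_eq_one_div, div_le_div_iff₀ h1 h2]
  linarith

/-- Rankin-type bound: the sum of `m ^ (A / log y - 1)` over `y`-smooth `m` is `O(1 + log y)`. -/
lemma exists_sum_smooth_le (A : ℝ) (hA : 0 < A) : ∃ C : ℝ, 0 < C ∧ ∀ y : ℝ, 1 ≤ y →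
    4 * A ≤ Real.log y → ∀ T : Finset ℕ,
    (∀ m ∈ T, m ≠ 0 ∧ ∀ p : ℕ, p.Prime → p ∣ m → (p : ℝ) ≤ y) →
    ∑ m ∈ T, (m : ℝ) ^ (A / Real.log y - 1) ≤ C * (1 + Real.log y) := by
  set K := A * Real.exp A + 1 with hK
  have hK0 : 0 < K := by positivity
  refine ⟨Real.exp (8 * K), Real.exp_pos _, fun y hy hAy T hT => ?_⟩
  have hL : 0 < Real.log y := by linarith
  set L := Real.log y with hLdef
  have hκ : A / L ≤ 1 / 4 := by rw [div_le_iff₀ hL]; linarith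
  have hκ0 : 0 < A / L := by positivity
  set N := ⌊y⌋₊ with hN
  have hN1 : 1 ≤ N := Nat.le_floor (by simpa using hy)
  have hTs : ∀ m ∈ T, m ∈ (N + 1).smoothNumbers := by
    intro m hm
    rw [Nat.mem_smoothNumbers]
    refine ⟨(hT m hm).1, fun p hp => Nat.lt_succ_of_le (Nat.le_floor ?_)⟩
    exact (hT m hm).2 p (Nat.prime_of_mem_primeFactorsList hp) (Nat.dvd_of_mem_primeFactorsList hp)
  refine (sum_smooth_rpow_le (by linarith) (N + 1) T hTs).trans ?_
  have hfac : ∀ p ∈ (N + 1).primesBelow, (1 - (p : ℝ) ^ (A / L - 1))⁻¹ ≤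
      (1 - (p : ℝ) ^ (-1 - 1 / L))⁻¹ * Real.exp (4 * K / L * (Real.log p / p)) := by
    intro p hp
    have hpp := Nat.prime_of_mem_primesBelow hp
    have hp2 : (2 : ℝ) ≤ p := by exact_mod_cast hpp.two_le
    have hp0 : (0 : ℝ) < p := by linarith
    have hpN : p ≤ N := Nat.lt_succ_iff.1 (Nat.lt_of_mem_primesBelow hp)
    have hpy : (p : ℝ) ≤ y := (Nat.le_floor_iff (by linarith)).1 hpN
    have hlp : 0 < Real.log p := Real.log_pos (by linarith)
    have hlpL : Real.log p ≤ L := Real.log_le_log hp0 hpy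
    have hx : (p : ℝ) ^ (A / L - 1) ≤ 3 / 4 := by
      calc (p : ℝ) ^ (A / L - 1) ≤ (p : ℝ) ^ (-(1 / 2) : ℝ) :=
            Real.rpow_le_rpow_of_exponent_le (by linarith) (by linarith)
        _ ≤ (2 : ℝ) ^ (-(1 / 2) : ℝ) :=
            Real.rpow_le_rpow_of_nonpos (by norm_num) hp2 (by norm_num)
        _ ≤ 3 / 4 := by
          rw [Real.rpow_neg (by norm_num), ← Real.sqrt_eq_rpow,
            inv_le_comm₀ (by positivity) (by norm_num)]
          exact Real.le_sqrt_of_sq_le (by norm_num)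
    have hx' : (p : ℝ) ^ (-1 - 1 / L) ≤ (p : ℝ) ^ (A / L - 1) := by
      apply Real.rpow_le_rpow_of_exponent_le (by linarith)
      have : 0 < 1 / L := by positivity
      linarith
    refine (one_sub_inv_le_mul_exp hx' hx).trans ?_
    have hpos : 0 ≤ (1 - (p : ℝ) ^ (-1 - 1 / L))⁻¹ := inv_nonneg.2 (by linarith)
    refine mul_le_mul_of_nonneg_left (Real.exp_le_exp.2 ?_) hpos
    have e1 : (p : ℝ) ^ (A / L - 1) = Real.exp (A * (Real.log p / L)) / p := by
      rw [Real.rpow_sub_one hp0.ne', Real.rpow_def_of_pos hp0]; congr 2; ring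
    have e2 : (p : ℝ) ^ (-1 - 1 / L) = Real.exp (-(Real.log p / L)) / p := by
      rw [show -1 - 1 / L = -(1 / L) - 1 by ring, Real.rpow_sub_one hp0.ne',
        Real.rpow_def_of_pos hp0]; congr 2; ring
    have ht0 : 0 ≤ Real.log p / L := by positivity
    have ht1 : Real.log p / L ≤ 1 := (div_le_one hL).2 hlpL
    have b1 := exp_le_one_add_mul_exp (w := A * (Real.log p / L)) (A := A) (by positivity)
      (mul_le_of_le_one_right hA.le ht1)
    have b2 := Real.add_one_le_exp (-(Real.log p / L))
    have b3 : Real.exp (A * (Real.log p / L)) - Real.exp (-(Real.log p / L)) ≤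
        K * (Real.log p / L) := by rw [hK]; linarith
    calc 4 * ((p : ℝ) ^ (A / L - 1) - (p : ℝ) ^ (-1 - 1 / L))
        = 4 * ((Real.exp (A * (Real.log p / L)) - Real.exp (-(Real.log p / L))) / p) := by
          rw [e1, e2]; ring
      _ ≤ 4 * (K * (Real.log p / L) / p) := by gcongr
      _ = _ := by ring
  have hinv : ∀ p ∈ (N + 1).primesBelow, 0 ≤ (1 - (p : ℝ) ^ (A / L - 1))⁻¹ := by
    intro p hp
    have hp2 : (1 : ℝ) < p := by exact_mod_cast (Nat.prime_of_mem_primesBelow hp).one_lt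
    have := Real.rpow_lt_one_of_one_lt_of_neg (z := A / L - 1) hp2 (by linarith)
    exact inv_nonneg.2 (by linarith)
  refine (Finset.prod_le_prod hinv hfac).trans ?_
  rw [Finset.prod_mul_distrib, ← Real.exp_sum, ← Finset.mul_sum, mul_comm]
  have hs := sum_log_div_prime_le hN1
  have hlogN : Real.log N ≤ L :=
    Real.log_le_log (by exact_mod_cast hN1) (Nat.floor_le (by linarith))
  have hexp : 4 * K / L * ∑ p ∈ (N + 1).primesBelow, Real.log p / p ≤ 8 * K := by
    calc _ ≤ 4 * K / L * (2 * L) := by gcongr; linarith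
      _ = 8 * K := by field_simp; ring
  have hz := prod_primesBelow_le (δ := 1 / L) (by positivity) (N + 1)
  rw [one_div_one_div] at hz
  exact mul_le_mul (Real.exp_le_exp.2 hexp) hz
    (Finset.prod_nonneg fun p hp => inv_nonneg.2 (by
      have hp2 : (1 : ℝ) < p := by exact_mod_cast (Nat.prime_of_mem_primesBelow hp).one_lt
      have h1L : 0 < 1 / L := by positivity
      have := Real.rpow_lt_one_of_one_lt_of_neg (z := -1 - 1 / L) hp2 (by linarith)
      linarith)) (Real.exp_pos _).le

lemma exists_sum_smooth_rpow_neg_le (N : ℕ) {s : ℝ} (hs : s < 0) : ∃ C : ℝ, 0 < C ∧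
    ∀ T : Finset ℕ, (∀ m ∈ T, m ∈ N.smoothNumbers) → ∑ m ∈ T, (m : ℝ) ^ s ≤ C := by
  refine ⟨_, ?_, fun T hT => sum_smooth_rpow_le hs N T hT⟩
  refine Finset.prod_pos fun p hp => ?_
  have hp2 : (1 : ℝ) < p := by exact_mod_cast (Nat.prime_of_mem_primesBelow hp).one_lt
  have := Real.rpow_lt_one_of_one_lt_of_neg hp2 hs
  exact inv_pos.2 (by linarith)

lemma exists_smooth_mul_rough (N : ℕ) {n : ℕ} (hn : n ≠ 0) : ∃ a b : ℕ, n = a * b ∧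
    a ∈ N.smoothNumbers ∧ ∀ q : ℕ, q.Prime → q ∣ b → N ≤ q := by
  classical
  obtain ⟨a, ha, hmax⟩ := (n.divisors.filter (· ∈ N.smoothNumbers)).exists_max_image id
    ⟨1, by simp [hn, Nat.mem_smoothNumbers_iff_primeFactors_subset]⟩
  rw [Finset.mem_filter, Nat.mem_divisors] at ha
  obtain ⟨⟨⟨b, hb⟩, -⟩, has⟩ := ha
  refine ⟨a, b, hb, has, fun q hq ⟨c, hc⟩ => ?_⟩
  by_contra! hlt
  have h := hmax (a * q) (by
    rw [Finset.mem_filter, Nat.mem_divisors]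
    exact ⟨⟨⟨c, by rw [hb, hc, mul_assoc]⟩, hn⟩,
      Nat.mul_mem_smoothNumbers has (Nat.mem_smoothNumbers_of_lt hq.pos hlt)⟩)
  have ha0 := Nat.pos_of_ne_zero (Nat.ne_zero_of_mem_smoothNumbers has)
  have := hq.two_le
  simp only [id] at h
  nlinarith

lemma tauNat_le_rpow (k : ℕ) (hk : 1 ≤ k) {ε : ℝ} (hε : 0 < ε) : ∃ C : ℝ, 0 < C ∧
    ∀ n : ℕ, n ≠ 0 → (tauNat k n : ℝ) ≤ C * (n : ℝ) ^ ε := by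
  obtain ⟨N, hN⟩ := exists_nat_ge ((k : ℝ) ^ (1 / ε))
  set M := N + 2
  have hk0 : (0 : ℝ) < k := by exact_mod_cast hk
  have hkM : (k : ℝ) ≤ (M : ℝ) ^ ε := by
    have h1 : (k : ℝ) ^ (1 / ε) ≤ M := hN.trans (by simp [M])
    have h2 := Real.rpow_le_rpow (by positivity) h1 hε.le
    rwa [← Real.rpow_mul hk0.le, one_div_mul_cancel hε.ne', Real.rpow_one] at h2
  obtain ⟨C, hC, hCT⟩ := exists_sum_smooth_rpow_neg_le M (s := -ε) (by linarith)
  refine ⟨k * C ^ k, by positivity, fun n hn => ?_⟩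
  obtain ⟨a, b, rfl, ha, hb⟩ := exists_smooth_mul_rough M hn
  have ha0 : a ≠ 0 := left_ne_zero_of_mul hn
  have hb0 : b ≠ 0 := right_ne_zero_of_mul hn
  have haR : (0 : ℝ) < a := by exact_mod_cast Nat.pos_of_ne_zero ha0
  have hbR : (0 : ℝ) < b := by exact_mod_cast Nat.pos_of_ne_zero hb0
  have hta : (tauNat k a : ℝ) ≤ C ^ k * (a : ℝ) ^ ε := by
    have h1 := sum_tauNat_mul_rpow_le k (-ε) {a} a.divisors (by
      intro d hd m hm
      rw [Finset.mem_singleton] at hd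
      subst hd
      exact Nat.mem_divisors.2 ⟨hm, ha0⟩)
    rw [Finset.sum_singleton] at h1
    have h2 := hCT a.divisors fun m hm =>
      Nat.mem_smoothNumbers_of_dvd ha (Nat.dvd_of_mem_divisors hm)
    have h3 := h1.trans (pow_le_pow_left₀ (Finset.sum_nonneg fun m _ => by positivity) h2 k)
    rwa [Real.rpow_neg haR.le, ← div_eq_mul_inv, div_le_iff₀ (by positivity)] at h3
  set r := Nat.log M b
  have hlt : b < M ^ (r + 1) := Nat.lt_pow_succ_log_self (by omega) b
  have hle : M ^ r ≤ b := Nat.pow_log_le_self M hb0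
  have h1 : (tauNat k (a * b) : ℝ) ≤ (k : ℝ) ^ (r + 1) * tauNat k a := by
    exact_mod_cast tauNat_mul_le_pow k hk ha0 (r + 1) b hb0 hb hlt
  have h2 : (k : ℝ) ^ r ≤ (b : ℝ) ^ ε := by
    calc (k : ℝ) ^ r ≤ ((M : ℝ) ^ ε) ^ r := by gcongr
      _ = ((M : ℝ) ^ r) ^ ε := by
        rw [← Real.rpow_natCast, ← Real.rpow_natCast, ← Real.rpow_mul (by positivity),
          ← Real.rpow_mul (by positivity), mul_comm]
      _ ≤ (b : ℝ) ^ ε := by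
        apply Real.rpow_le_rpow (by positivity) _ hε.le
        exact_mod_cast hle
  rw [Nat.cast_mul, Real.mul_rpow haR.le hbR.le]
  calc (tauNat k (a * b) : ℝ) ≤ (k : ℝ) ^ r * k * tauNat k a := by rw [← pow_succ]; exact h1
    _ ≤ (b : ℝ) ^ ε * k * (C ^ k * (a : ℝ) ^ ε) := by gcongr
    _ = _ := by ring

/-- Splitting off the product `a` of the smallest prime factors of `n`, as long as `a ≤ z`. -/
lemma exists_prefix_factor {n z : ℕ} (hz : 1 ≤ z) (hzn : z < n) : ∃ a b p : ℕ, n = a * b ∧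
    a ≤ z ∧ p.Prime ∧ (∀ q : ℕ, q.Prime → q ∣ b → p ≤ q) ∧
    (∀ q : ℕ, q.Prime → q ∣ a → q ≤ p) ∧ z < a * p := by
  classical
  have hn : n ≠ 0 := by omega
  obtain ⟨a, ha, hmax⟩ := (n.divisors.filter (fun a => a ≤ z ∧ ∀ q r : ℕ, q.Prime → r.Prime →
    q ∣ a → r ∣ n / a → q ≤ r)).exists_max_image id ⟨1, by
      simp only [Finset.mem_filter, Nat.one_mem_divisors]
      refine ⟨hn, hz, fun q r hq _ h => absurd (Nat.dvd_one.1 h) hq.ne_one⟩⟩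
  rw [Finset.mem_filter, Nat.mem_divisors] at ha
  obtain ⟨⟨⟨b, hb⟩, -⟩, haz, hqr⟩ := ha
  have ha0 : 0 < a := Nat.pos_of_ne_zero (by rintro rfl; simp at hb; omega)
  rw [hb, Nat.mul_div_cancel_left b ha0] at hqr
  have hb1 : b ≠ 1 := by rintro rfl; omega
  have hp := Nat.minFac_prime hb1
  have hpb := Nat.minFac_dvd b
  have hmin : ∀ q : ℕ, q.Prime → q ∣ b → b.minFac ≤ q := fun q hq h =>
    Nat.minFac_le_of_dvd hq.two_le h
  set p := b.minFac
  refine ⟨a, b, p, hb, haz, hp, hmin, fun q hq hqa => hqr q p hq hp hqa hpb, ?_⟩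
  by_contra! hle
  obtain ⟨c, hc⟩ := hpb
  have h := hmax (a * p) (by
    rw [Finset.mem_filter, Nat.mem_divisors]
    refine ⟨⟨⟨c, by rw [hb, mul_assoc, ← hc]⟩, hn⟩, hle, fun q r hq hr hqa hrn => ?_⟩
    rw [hb, hc, ← mul_assoc, Nat.mul_div_cancel_left c (Nat.mul_pos ha0 hp.pos)] at hrn
    have hrb : r ∣ b := hc ▸ hrn.mul_left _
    rcases (Nat.Prime.dvd_mul hq).1 hqa with h | h
    · exact hqr q r hq hr h hrb
    · rw [(Nat.prime_dvd_prime_iff_eq hq hp).1 h]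
      exact hmin r hr hrb)
  have := hp.two_le
  simp only [id] at h
  nlinarith

/-- A majorant, supported on divisors `d ≤ z`, for `tauNat k` on `[1, z ^ B]`. -/
noncomputable def tauMajorant (k B P : ℕ) (A C : ℝ) (z d : ℕ) : ℝ :=
  open Classical in
  (tauNat k d : ℝ) * (1 + (k : ℝ) ^ (2 * B)) +
    ∑ s ∈ Finset.Icc 2 z with 4 * A * ((s : ℕ) : ℝ) ≤ Real.log z,
      (if ∀ q : ℕ, q.Prime → q ∣ d → q ^ s ≤ z then
        (k : ℝ) ^ ((s + 1) * B) * Real.exp (-(A * s / 2)) *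
          ((tauNat k d : ℝ) * (d : ℝ) ^ (A * s / Real.log z)) else 0) +
    (if d ∈ P.smoothNumbers then C * (d : ℝ) ^ (1 / 4 : ℝ) else 0)

lemma tauMajorant_terms_nonneg (k B P : ℕ) (A : ℝ) {C : ℝ} (hC : 0 ≤ C) (z d : ℕ) :
    open Classical in
    0 ≤ (tauNat k d : ℝ) * (1 + (k : ℝ) ^ (2 * B)) ∧
    (∀ s : ℕ, 0 ≤ (if ∀ q : ℕ, q.Prime → q ∣ d → q ^ s ≤ z then
        (k : ℝ) ^ ((s + 1) * B) * Real.exp (-(A * s / 2)) *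
          ((tauNat k d : ℝ) * (d : ℝ) ^ (A * s / Real.log z)) else 0)) ∧
    0 ≤ (if d ∈ P.smoothNumbers then C * (d : ℝ) ^ (1 / 4 : ℝ) else 0) := by
  refine ⟨by positivity, fun s => ?_, ?_⟩ <;> split_ifs <;> positivity

lemma tauMajorant_nonneg (k B P : ℕ) (A : ℝ) {C : ℝ} (hC : 0 ≤ C) (z d : ℕ) :
    0 ≤ tauMajorant k B P A C z d := by
  obtain ⟨h1, h2, h3⟩ := tauMajorant_terms_nonneg k B P A hC z d
  exact add_nonneg (add_nonneg h1 (Finset.sum_nonneg fun s _ => h2 s)) h3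

lemma tauNat_le_sum_tauMajorant {k B P : ℕ} (hk : 1 ≤ k) (hB : 1 ≤ B) {A C : ℝ} (hA : 0 < A)
    (hC : 0 ≤ C) (hP : Real.exp (4 * A) ≤ P)
    (hdiv : ∀ n : ℕ, n ≠ 0 → (tauNat k n : ℝ) ≤ C * (n : ℝ) ^ (1 / (8 * B) : ℝ))
    {z n : ℕ} (hz : 1 ≤ z) (hn : n ≠ 0) (hnz : n ≤ z ^ B) :
    (tauNat k n : ℝ) ≤ ∑ d ∈ Finset.Icc 1 z with d ∣ n, tauMajorant k B P A C z d := by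
  classical
  suffices h : ∃ a, 1 ≤ a ∧ a ≤ z ∧ a ∣ n ∧ (tauNat k n : ℝ) ≤ tauMajorant k B P A C z a by
    obtain ⟨a, h1, h2, h3, h4⟩ := h
    refine h4.trans (Finset.single_le_sum (f := fun d => tauMajorant k B P A C z d)
      (fun d _ => tauMajorant_nonneg k B P A hC z d) ?_)
    simp [h1, h2, h3]
  rcases le_or_gt n z with hle | hgt
  · obtain ⟨h1, h2, h3⟩ := tauMajorant_terms_nonneg k B P A hC z n
    have h2' := Finset.sum_nonneg (s := {s ∈ Finset.Icc 2 z | 4 * A * ((s : ℕ) : ℝ) ≤ Real.log z})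
      fun s _ => h2 s
    refine ⟨n, Nat.pos_of_ne_zero hn, hle, dvd_rfl, ?_⟩
    have : (tauNat k n : ℝ) ≤ (tauNat k n : ℝ) * (1 + (k : ℝ) ^ (2 * B)) :=
      le_mul_of_one_le_right (Nat.cast_nonneg _) (by simp)
    unfold tauMajorant
    linarith
  obtain ⟨a, b, p, hab, haz, hp, hpb, hpa, hzap⟩ := exists_prefix_factor hz hgt
  have ha0 : a ≠ 0 := by rintro rfl; simp at hzap
  have hb0 : b ≠ 0 := by rintro rfl; simp at hab; exact hn hab
  refine ⟨a, Nat.pos_of_ne_zero ha0, haz, ⟨b, hab⟩, ?_⟩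
  obtain ⟨h1, h2, h3⟩ := tauMajorant_terms_nonneg k B P A hC z a
  have h2' := Finset.sum_nonneg (s := {s ∈ Finset.Icc 2 z | 4 * A * ((s : ℕ) : ℝ) ≤ Real.log z})
    fun s _ => h2 s
  have hp2 := hp.two_le
  have hk1 : (1 : ℝ) ≤ k := by exact_mod_cast hk
  obtain ⟨s, hs1, hs2⟩ : ∃ s, p ^ s ≤ z ∧ z < p ^ (s + 1) :=
    ⟨Nat.log p z, Nat.pow_log_le_self p (by omega), Nat.lt_pow_succ_log_self hp.one_lt z⟩
  have hblt : b < p ^ ((s + 1) * B) := by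
    calc b ≤ n := Nat.le_of_dvd (Nat.pos_of_ne_zero hn) ⟨a, by rw [hab, mul_comm]⟩
      _ ≤ z ^ B := hnz
      _ < (p ^ (s + 1)) ^ B := Nat.pow_lt_pow_left hs2 (by omega)
      _ = _ := by rw [← pow_mul]
  have htau : (tauNat k n : ℝ) ≤ (k : ℝ) ^ ((s + 1) * B) * tauNat k a := by
    rw [hab]
    exact_mod_cast tauNat_mul_le_pow k hk ha0 _ b hb0 hpb hblt
  rcases le_or_gt s 1 with hs | hs
  · have : (k : ℝ) ^ ((s + 1) * B) * tauNat k a ≤ (tauNat k a : ℝ) * (1 + (k : ℝ) ^ (2 * B)) := by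
      have : (k : ℝ) ^ ((s + 1) * B) ≤ (k : ℝ) ^ (2 * B) :=
        pow_le_pow_right₀ hk1 (Nat.mul_le_mul_right _ (by omega))
      rw [mul_comm]
      gcongr
      linarith
    unfold tauMajorant
    linarith
  have hza : z < a ^ 2 := by
    have hpz : p ^ 2 ≤ z := (Nat.pow_le_pow_right (by omega) hs).trans hs1
    by_contra! hcon
    have : z ^ 2 < (a * p) ^ 2 := Nat.pow_lt_pow_left hzap (by norm_num)
    rw [mul_pow] at this
    nlinarith [Nat.mul_le_mul hcon hpz]
  have hz0 : (0 : ℝ) < z := by exact_mod_cast hz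
  have haR : (0 : ℝ) < a := by exact_mod_cast Nat.pos_of_ne_zero ha0
  have hloga : Real.log z / 2 ≤ Real.log a := by
    have := Real.log_le_log hz0 (show (z : ℝ) ≤ (a : ℝ) ^ 2 by exact_mod_cast hza.le)
    rw [Real.log_pow] at this
    push_cast at this
    linarith
  have hslog : s * Real.log p ≤ Real.log z := by
    rw [← Real.log_pow]
    exact Real.log_le_log (by have := hp.pos; positivity) (by exact_mod_cast hs1)
  rcases le_or_gt (4 * A * (s : ℝ)) (Real.log z) with hsA | hsA
  · have hsz : s ≤ z := (Nat.lt_pow_self hp.one_lt).le.trans hs1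
    have hL : 0 < Real.log z := lt_of_lt_of_le (by positivity) hsA
    have hterm := Finset.single_le_sum (s := {s ∈ Finset.Icc 2 z | 4 * A * ((s : ℕ) : ℝ) ≤ Real.log z})
      (fun s _ => h2 s) (a := s) (by simp only [Finset.mem_filter, Finset.mem_Icc]; exact ⟨⟨hs, hsz⟩, hsA⟩)
    rw [if_pos (fun q hq hqa => (Nat.pow_le_pow_left (hpa q hq hqa) s).trans hs1)] at hterm
    have hone : 1 ≤ Real.exp (-(A * s / 2)) * (a : ℝ) ^ (A * s / Real.log z) := by
      rw [Real.rpow_def_of_pos haR, ← Real.exp_add]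
      apply Real.one_le_exp
      have : A * s / 2 = (Real.log z / 2) * (A * s / Real.log z) := by field_simp
      rw [this]
      have := mul_le_mul_of_nonneg_right hloga (show 0 ≤ A * s / Real.log z by positivity)
      linarith
    have h5 : (k : ℝ) ^ ((s + 1) * B) * tauNat k a ≤
        (k : ℝ) ^ ((s + 1) * B) * Real.exp (-(A * s / 2)) *
          ((tauNat k a : ℝ) * (a : ℝ) ^ (A * s / Real.log z)) := by
      have := le_mul_of_one_le_right
        (show 0 ≤ (k : ℝ) ^ ((s + 1) * B) * (tauNat k a : ℝ) by positivity) hone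
      refine this.trans (le_of_eq ?_)
      ring
    unfold tauMajorant
    linarith
  · have hlogp : Real.log p < 4 * A := by
      have hs0 : (0 : ℝ) < s := by exact_mod_cast (by omega : 0 < s)
      have : s * Real.log p < s * (4 * A) := by linarith
      exact lt_of_mul_lt_mul_left this hs0.le
    have hpP : p < P := by
      have : (p : ℝ) < P := lt_of_lt_of_le
        ((Real.log_lt_iff_lt_exp (by exact_mod_cast hp.pos)).1 hlogp) hP
      exact_mod_cast this
    have hasm : a ∈ P.smoothNumbers :=
      Nat.mem_smoothNumbers.2 ⟨ha0, fun q hq => lt_of_le_of_lt (hpa q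
        (Nat.prime_of_mem_primeFactorsList hq) (Nat.dvd_of_mem_primeFactorsList hq)) hpP⟩
    rw [if_pos hasm] at h3
    have hBR : (0 : ℝ) < B := by exact_mod_cast hB
    have h6 : (n : ℝ) ^ (1 / (8 * B) : ℝ) ≤ (a : ℝ) ^ (1 / 4 : ℝ) := by
      calc (n : ℝ) ^ (1 / (8 * B) : ℝ) ≤ ((z : ℝ) ^ B) ^ (1 / (8 * B) : ℝ) :=
            Real.rpow_le_rpow (by positivity) (by exact_mod_cast hnz) (by positivity)
        _ = (z : ℝ) ^ (1 / 8 : ℝ) := by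
            rw [← Real.rpow_natCast, ← Real.rpow_mul hz0.le]; congr 1; field_simp
        _ ≤ ((a : ℝ) ^ 2) ^ (1 / 8 : ℝ) :=
            Real.rpow_le_rpow hz0.le (by exact_mod_cast hza.le) (by norm_num)
        _ = (a : ℝ) ^ (1 / 4 : ℝ) := by
            rw [← Real.rpow_natCast, ← Real.rpow_mul haR.le]; congr 1; norm_num
    have h7 : (tauNat k n : ℝ) ≤ C * (a : ℝ) ^ (1 / 4 : ℝ) :=
      (hdiv n hn).trans (by gcongr)
    unfold tauMajorant
    rw [if_pos hasm]
    linarith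

lemma sum_tauNat_div_le (k : ℕ) {z : ℕ} :
    ∑ d ∈ Finset.Icc 1 z, (tauNat k d : ℝ) / d ≤ (1 + Real.log z) ^ k := by
  have h1 := sum_tauNat_mul_rpow_le k (-1) (Finset.Icc 1 z) (Finset.Icc 1 z) (by
    intro d hd m hm
    rw [Finset.mem_Icc] at hd ⊢
    exact ⟨Nat.pos_of_dvd_of_pos hm hd.1, (Nat.le_of_dvd hd.1 hm).trans hd.2⟩)
  simp only [Real.rpow_neg_one, ← div_eq_mul_inv] at h1
  refine h1.trans (pow_le_pow_left₀ (Finset.sum_nonneg fun m _ => by positivity) ?_ k)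
  have h2 := harmonic_le_one_add_log z
  rw [harmonic_eq_sum_Icc] at h2
  push_cast at h2
  exact h2

lemma sum_tauMajorant_div_le {k B P : ℕ} (hk : 1 ≤ k) {A C C₁ C₃ : ℝ}
    (hA : A = 2 * (B * Real.log k + 1)) (hA0 : 0 < A) (hC : 0 ≤ C) (hC₁ : 0 ≤ C₁)
    (hsmooth : ∀ y : ℝ, 1 ≤ y → 4 * A ≤ Real.log y → ∀ T : Finset ℕ,
      (∀ m ∈ T, m ≠ 0 ∧ ∀ p : ℕ, p.Prime → p ∣ m → (p : ℝ) ≤ y) →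
      ∑ m ∈ T, (m : ℝ) ^ (A / Real.log y - 1) ≤ C₁ * (1 + Real.log y))
    (hfix : ∀ T : Finset ℕ, (∀ m ∈ T, m ∈ P.smoothNumbers) →
      ∑ m ∈ T, (m : ℝ) ^ (-(3 / 4) : ℝ) ≤ C₃)
    {z : ℕ} (hz : 1 ≤ z) :
    ∑ d ∈ Finset.Icc 1 z, tauMajorant k B P A C z d / d ≤
      ((1 + (k : ℝ) ^ (2 * B)) + (k : ℝ) ^ B * C₁ ^ k * (1 - Real.exp (-1))⁻¹ + C * C₃) *
        (1 + Real.log z) ^ k := by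
  classical
  have hz0 : (0 : ℝ) < z := by exact_mod_cast hz
  have hkR : (0 : ℝ) < k := by exact_mod_cast hk
  have hlz : 0 ≤ Real.log z := Real.log_natCast_nonneg z
  have hC₃ : 0 ≤ C₃ := by simpa using hfix ∅ (by simp)
  have hpow1 : 1 ≤ (1 + Real.log z) ^ k := one_le_pow₀ (by linarith)
  have hs : ∀ s ∈ {s ∈ Finset.Icc 2 z | 4 * A * ((s : ℕ) : ℝ) ≤ Real.log z},
      ∑ d ∈ Finset.Icc 1 z, (if ∀ q : ℕ, q.Prime → q ∣ d → q ^ s ≤ z then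
        (k : ℝ) ^ ((s + 1) * B) * Real.exp (-(A * s / 2)) *
          ((tauNat k d : ℝ) * (d : ℝ) ^ (A * s / Real.log z)) else 0) / d ≤
      (k : ℝ) ^ B * Real.exp (-1) ^ s * (C₁ * (1 + Real.log z)) ^ k := by
    intro s hs
    simp only [Finset.mem_filter, Finset.mem_Icc] at hs
    obtain ⟨⟨hs2, hsz⟩, hsA⟩ := hs
    have hs0 : (0 : ℝ) < s := by exact_mod_cast (by omega : 0 < s)
    have hs1 : (1 : ℝ) ≤ s := by exact_mod_cast (by omega : 1 ≤ s)
    have hL : 0 < Real.log z := lt_of_lt_of_le (by positivity) hsA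
    set y := (z : ℝ) ^ (1 / s : ℝ) with hy
    have hlogy : Real.log y = Real.log z / s := by
      rw [hy, Real.log_rpow hz0]; ring
    have hy1 : 1 ≤ y := Real.one_le_rpow (by exact_mod_cast hz) (by positivity)
    set D := {d ∈ Finset.Icc 1 z | ∀ q : ℕ, q.Prime → q ∣ d → q ^ s ≤ z} with hD
    have hDsm : ∀ m ∈ D, m ≠ 0 ∧ ∀ p : ℕ, p.Prime → p ∣ m → (p : ℝ) ≤ y := by
      intro m hm
      rw [hD, Finset.mem_filter, Finset.mem_Icc] at hm
      refine ⟨by omega, fun p hp hpm => ?_⟩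
      have h1 : (p : ℝ) ^ s ≤ z := by exact_mod_cast hm.2 p hp hpm
      rw [hy, ← Real.rpow_natCast] at *
      have h2 := Real.rpow_le_rpow (by positivity) h1 (show 0 ≤ (1 / s : ℝ) by positivity)
      rwa [← Real.rpow_mul (Nat.cast_nonneg _), mul_one_div_cancel hs0.ne', Real.rpow_one] at h2
    have hsum := hsmooth y hy1 (by rw [hlogy, le_div_iff₀ hs0]; exact hsA) D hDsm
    have htau := sum_tauNat_mul_rpow_le k (A / Real.log y - 1) D D (by
      intro d hd m hm
      simp only [hD, Finset.mem_filter, Finset.mem_Icc] at hd ⊢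
      exact ⟨⟨Nat.pos_of_dvd_of_pos hm hd.1.1, (Nat.le_of_dvd hd.1.1 hm).trans hd.1.2⟩,
        fun q hq hqm => hd.2 q hq (hqm.trans hm)⟩)
    have hle : ∑ d ∈ D, (tauNat k d : ℝ) * (d : ℝ) ^ (A / Real.log y - 1) ≤
        (C₁ * (1 + Real.log z)) ^ k := by
      refine htau.trans (pow_le_pow_left₀ (Finset.sum_nonneg fun m _ => by positivity) ?_ k)
      refine hsum.trans (mul_le_mul_of_nonneg_left ?_ hC₁)
      rw [hlogy]
      linarith [div_le_self hlz hs1]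
    have hcoef : (k : ℝ) ^ ((s + 1) * B) * Real.exp (-(A * s / 2)) =
        (k : ℝ) ^ B * Real.exp (-1) ^ s := by
      have : (k : ℝ) ^ (s * B) = Real.exp (s * B * Real.log k) := by
        rw [← Real.exp_log hkR, ← Real.exp_nat_mul, Real.exp_log hkR]; push_cast; rfl
      rw [add_mul, one_mul, pow_add, this, ← Real.exp_nat_mul, mul_right_comm, ← Real.exp_add,
        mul_comm, hA]
      congr 2
      ring
    calc _ = ∑ d ∈ D, (k : ℝ) ^ ((s + 1) * B) * Real.exp (-(A * s / 2)) *
          ((tauNat k d : ℝ) * (d : ℝ) ^ (A / Real.log y - 1)) := by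
          rw [hD, Finset.sum_filter]
          refine Finset.sum_congr rfl fun d hd => ?_
          have hd0 : (0 : ℝ) < d := by exact_mod_cast (Finset.mem_Icc.1 hd).1
          split_ifs
          · have : A / Real.log y = A * s / Real.log z := by rw [hlogy]; field_simp
            rw [this, Real.rpow_sub_one hd0.ne']
            ring
          · simp
      _ ≤ _ := by
          rw [← Finset.mul_sum, hcoef]
          gcongr
  have hgeom : ∑ s ∈ {s ∈ Finset.Icc 2 z | 4 * A * ((s : ℕ) : ℝ) ≤ Real.log z}, Real.exp (-1) ^ s ≤
      (1 - Real.exp (-1))⁻¹ := by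
    have h1 : Real.exp (-1) < 1 := by simp
    rw [← tsum_geometric_of_lt_one (Real.exp_pos _).le h1]
    exact (summable_geometric_of_lt_one (Real.exp_pos _).le h1).sum_le_tsum _
      fun s _ => by positivity
  have hlast : ∑ d ∈ Finset.Icc 1 z,
      (if d ∈ P.smoothNumbers then C * (d : ℝ) ^ (1 / 4 : ℝ) else 0) / d ≤ C * C₃ := by
    refine le_trans (le_of_eq ?_) (mul_le_mul_of_nonneg_left
      (hfix {d ∈ Finset.Icc 1 z | d ∈ P.smoothNumbers} (by simp)) hC)
    rw [Finset.mul_sum, Finset.sum_filter]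
    refine Finset.sum_congr rfl fun d hd => ?_
    have hd0 : (0 : ℝ) < d := by exact_mod_cast (Finset.mem_Icc.1 hd).1
    split_ifs
    · rw [show (-(3 / 4) : ℝ) = 1 / 4 - 1 by norm_num, Real.rpow_sub_one hd0.ne']
      ring
    · simp
  unfold tauMajorant
  simp only [add_div, Finset.sum_add_distrib, Finset.sum_div]
  rw [Finset.sum_comm, add_mul, add_mul]
  refine add_le_add (add_le_add ?_ ?_) ?_
  · have := mul_le_mul_of_nonneg_left (sum_tauNat_div_le k (z := z))
      (show 0 ≤ 1 + (k : ℝ) ^ (2 * B) by positivity)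
    refine le_trans (le_of_eq ?_) this
    rw [Finset.mul_sum]
    exact Finset.sum_congr rfl fun d _ => by ring
  · refine (Finset.sum_le_sum hs).trans ?_
    rw [← Finset.sum_mul, ← Finset.mul_sum]
    have := mul_le_mul_of_nonneg_left hgeom
      (show 0 ≤ (k : ℝ) ^ B * C₁ ^ k * (1 + Real.log z) ^ k by positivity)
    refine le_trans (le_of_eq ?_) (this.trans (le_of_eq ?_))
    · rw [mul_pow]; ring
    · ring
  · exact hlast.trans (le_mul_of_one_le_right (by positivity) hpow1)

/-- There is a majorant `g W` of `tauNat k` on `[1, 3 W ^ k]`, given by a sum over divisors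
`d ≤ √W`, with the expected logarithmic mean value. -/
lemma exists_tauNat_majorant (k : ℕ) (hk : 1 ≤ k) : ∃ C : ℝ, 0 < C ∧ ∃ g : ℕ → ℕ → ℝ,
    (∀ W d, 0 ≤ g W d) ∧ ∀ W : ℕ, 1 ≤ W →
      (∀ n : ℕ, n ≠ 0 → n ≤ 3 * W ^ k →
        (tauNat k n : ℝ) ≤ ∑ d ∈ Finset.Icc 1 W.sqrt with d ∣ n, g W d) ∧
      ∑ d ∈ Finset.Icc 1 W.sqrt, g W d / d ≤ C * (1 + Real.log W) ^ k := by
  classical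
  set B := 4 * k + 2 with hB
  have hk1 : (1 : ℝ) ≤ k := by exact_mod_cast hk
  set A := 2 * (B * Real.log k + 1) with hA
  have hA0 : 0 < A := by have := Real.log_nonneg hk1; positivity
  obtain ⟨C₁, hC₁, hsmooth⟩ := exists_sum_smooth_le A hA0
  obtain ⟨C₂, hC₂, hdiv⟩ := tauNat_le_rpow k hk (ε := 1 / (8 * B)) (by positivity)
  obtain ⟨C₀, hC₀, hdiv1⟩ := tauNat_le_rpow k hk (ε := 1) one_pos
  set P := ⌈Real.exp (4 * A)⌉₊ with hP
  obtain ⟨C₃, hC₃, hfix⟩ := exists_sum_smooth_rpow_neg_le P (s := -(3 / 4)) (by norm_num)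
  set M := C₀ * (3 * 3 ^ k) with hM
  have hM0 : 0 < M := by positivity
  set C' := (1 + (k : ℝ) ^ (2 * B)) + (k : ℝ) ^ B * C₁ ^ k * (1 - Real.exp (-1))⁻¹ + C₂ * C₃
    with hC'
  have he : 0 < (1 - Real.exp (-1))⁻¹ := by
    have : Real.exp (-1) < 1 := by simp
    exact inv_pos.2 (by linarith)
  have hC'0 : 0 < C' := by positivity
  refine ⟨C' + M, by positivity, fun W d => tauMajorant k B P A C₂ W.sqrt d +
    (if d = 1 then M else 0), fun W d => ?_, fun W hW => ⟨fun n hn hnW => ?_, ?_⟩⟩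
  · exact add_nonneg (tauMajorant_nonneg k B P A hC₂.le _ _) (by split_ifs <;> positivity)
  · have hz1 : 1 ≤ W.sqrt := Nat.sqrt_pos.2 hW
    rw [Finset.sum_add_distrib]
    have hsecond : ∑ d ∈ Finset.Icc 1 W.sqrt with d ∣ n, (if d = 1 then M else 0) = M := by
      rw [Finset.sum_ite_eq' _ 1 fun _ => M, if_pos (by simp [hz1])]
    rw [hsecond]
    rcases Nat.lt_or_ge W.sqrt 2 with hlt | hge
    · have hW3 : W ≤ 3 := by
        have := Nat.lt_succ_sqrt W
        have h2 : W.sqrt = 1 := by omega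
        rw [h2] at this
        omega
      have h1 := hdiv1 n hn
      rw [Real.rpow_one] at h1
      have h2 : (n : ℝ) ≤ 3 * 3 ^ k := by
        have : n ≤ 3 * 3 ^ k := hnW.trans (by gcongr)
        exact_mod_cast this
      have h3 : 0 ≤ ∑ d ∈ Finset.Icc 1 W.sqrt with d ∣ n, tauMajorant k B P A C₂ W.sqrt d :=
        Finset.sum_nonneg fun d _ => tauMajorant_nonneg k B P A hC₂.le _ _
      have h4 : C₀ * n ≤ M := by rw [hM]; gcongr
      linarith
    · have hle : n ≤ W.sqrt ^ B := by
        have h1 : W ≤ W.sqrt ^ 4 := by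
          have := Nat.lt_succ_sqrt W
          have h2 : W.sqrt.succ ≤ W.sqrt ^ 2 := by
            rw [Nat.succ_eq_add_one]; nlinarith
          calc W ≤ W.sqrt.succ * W.sqrt.succ := this.le
            _ ≤ W.sqrt ^ 2 * W.sqrt ^ 2 := Nat.mul_le_mul h2 h2
            _ = _ := by ring
        calc n ≤ 3 * W ^ k := hnW
          _ ≤ W.sqrt ^ 2 * (W.sqrt ^ 4) ^ k := by
            gcongr
            nlinarith
          _ = W.sqrt ^ B := by rw [hB]; ring
      have := tauNat_le_sum_tauMajorant hk (by omega) hA0 hC₂.le (Nat.le_ceil _) hdiv hz1 hn hle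
      linarith
  · have hz1 : 1 ≤ W.sqrt := Nat.sqrt_pos.2 hW
    have h1 := sum_tauMajorant_div_le (B := B) hk hA hA0 hC₂.le hC₁.le hsmooth hfix hz1
    have hlog : Real.log W.sqrt ≤ Real.log W :=
      Real.log_le_log (by exact_mod_cast hz1) (by exact_mod_cast Nat.sqrt_le_self W)
    have hl0 : 0 ≤ Real.log W.sqrt := Real.log_natCast_nonneg _
    have hpow : (1 + Real.log W.sqrt) ^ k ≤ (1 + Real.log W) ^ k := by gcongr
    have h1' : 1 ≤ (1 + Real.log W) ^ k := one_le_pow₀ (by linarith)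
    simp only [add_div, Finset.sum_add_distrib]
    have hsecond : ∑ d ∈ Finset.Icc 1 W.sqrt, (if d = 1 then M else 0) / (d : ℝ) = M := by
      simp only [ite_div, zero_div]
      rw [Finset.sum_ite_eq' _ 1 fun d : ℕ => M / (d : ℝ), if_pos (by simp [hz1])]
      simp
    rw [hsecond, add_mul]
    refine add_le_add (h1.trans (mul_le_mul_of_nonneg_left hpow hC'0.le)) ?_
    exact le_mul_of_one_le_right hM0.le h1'

lemma card_mul_le_of_dvd_sub {S : Finset ℕ} {a L M : ℕ} (hM : 1 ≤ M) (hML : M ≤ L)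
    (hS : S ⊆ Finset.Ico a (a + L)) (h : ∀ x ∈ S, ∀ y ∈ S, (M : ℤ) ∣ (x : ℤ) - y) :
    S.card * M ≤ 2 * L := by
  have hcard : S.card ≤ (Finset.range (L / M + 1)).card := by
    refine Finset.card_le_card_of_injOn (fun x => (x - a) / M) ?_ ?_
    · intro x hx
      have := Finset.mem_Ico.1 (hS hx)
      simp only [Finset.coe_range, Set.mem_Iio]
      exact Nat.lt_succ_of_le (Nat.div_le_div_right (by omega))
    · intro x hx y hy hxy
      have hx1 := Finset.mem_Ico.1 (hS hx)
      have hy1 := Finset.mem_Ico.1 (hS hy)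
      have hd := h x hx y hy
      simp only at hxy
      have ex := Nat.div_add_mod (x - a) M
      have ey := Nat.div_add_mod (y - a) M
      have rx := Nat.mod_lt (x - a) hM
      have ry := Nat.mod_lt (y - a) hM
      rw [hxy] at ex
      have h0 : (x : ℤ) - y = 0 := by
        apply Int.eq_zero_of_abs_lt_dvd hd
        rw [abs_lt]
        constructor <;> omega
      omega
  rw [Finset.card_range] at hcard
  calc S.card * M ≤ (L / M + 1) * M := Nat.mul_le_mul_right _ hcard
    _ = L / M * M + M := by ring
    _ ≤ 2 * L := by have := Nat.div_mul_le_self L M; omega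

lemma card_multiples_mul_le {a L M : ℕ} (hM : 1 ≤ M) (hML : M ≤ L) :
    {x ∈ Finset.Ico a (a + L) | M ∣ x}.card * M ≤ 2 * L := by
  refine card_mul_le_of_dvd_sub hM hML (Finset.filter_subset _ _) fun x hx y hy => ?_
  exact dvd_sub (Int.natCast_dvd_natCast.2 (Finset.mem_filter.1 hx).2)
    (Int.natCast_dvd_natCast.2 (Finset.mem_filter.1 hy).2)

lemma card_pairs_mul_le {U V q d e : ℕ} (hd : 1 ≤ d) (he : 1 ≤ e)
    (hdU : d ≤ U.sqrt) (heW : e ≤ (max U V).sqrt) {ε : ℤ} (hε : ε = 1 ∨ ε = -1) :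
    {x ∈ Finset.Ico U (2 * U) ×ˢ Finset.Icc 1 V |
      d ∣ x.1 ∧ (e : ℤ) ∣ ε * x.2 + x.1 * q}.card * (d * e) ≤ 4 * (V * U) := by
  classical
  have hε2 : ε * ε = 1 := by rcases hε with rfl | rfl <;> norm_num
  have hIco : Finset.Ico U (2 * U) = Finset.Ico U (U + U) := by rw [two_mul]
  have hIcc : Finset.Icc 1 V = Finset.Ico 1 (1 + V) := by
    ext x; simp only [Finset.mem_Icc, Finset.mem_Ico]; omega
  have hdU' : d ≤ U := hdU.trans (Nat.sqrt_le_self U)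
  set S := {x ∈ Finset.Ico U (2 * U) ×ˢ Finset.Icc 1 V |
      d ∣ x.1 ∧ (e : ℤ) ∣ ε * x.2 + x.1 * q} with hS
  rcases le_or_gt e V with heV | heV
  · have hfib : ∀ u ∈ {u ∈ Finset.Ico U (U + U) | d ∣ u},
        {x ∈ S | x.1 = u}.card * e ≤ 2 * V := by
      intro u _
      have hinj : Set.InjOn Prod.snd (({x ∈ S | x.1 = u} : Finset (ℕ × ℕ)) : Set (ℕ × ℕ)) := by
        intro x hx y hy hxy
        simp only [Finset.coe_filter, Set.mem_ofPred_eq] at hx hy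
        exact Prod.ext (hx.2.trans hy.2.symm) hxy
      rw [← Finset.card_image_of_injOn hinj]
      refine card_mul_le_of_dvd_sub (a := 1) he heV ?_ ?_
      · intro v hv
        obtain ⟨x, hx, rfl⟩ := Finset.mem_image.1 hv
        simp only [hS, Finset.mem_filter, Finset.mem_product] at hx
        rw [← hIcc]
        exact hx.1.1.2
      · intro v hv w hw
        obtain ⟨x, hx, rfl⟩ := Finset.mem_image.1 hv
        obtain ⟨y, hy, rfl⟩ := Finset.mem_image.1 hw
        simp only [hS, Finset.mem_filter, Finset.mem_product] at hx hy
        have h := (dvd_sub hx.1.2.2 hy.1.2.2).mul_left ε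
        rw [hx.2, hy.2] at h
        have e1 : ε * (ε * (x.2 : ℤ) + u * q - (ε * y.2 + u * q)) = x.2 - y.2 := by
          linear_combination ((x.2 : ℤ) - y.2) * hε2
        rwa [e1] at h
    have hmaps : ∀ x ∈ S, x.1 ∈ {u ∈ Finset.Ico U (U + U) | d ∣ u} := by
      intro x hx
      simp only [hS, Finset.mem_filter, Finset.mem_product] at hx ⊢
      rw [← hIco]
      exact ⟨hx.1.1, hx.2.1⟩
    rw [Finset.card_eq_sum_card_fiberwise hmaps]
    have h1 := Finset.sum_le_sum hfib
    rw [← Finset.sum_mul, Finset.sum_const, smul_eq_mul] at h1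
    have h2 := card_multiples_mul_le (a := U) hd hdU'
    calc _ = (∑ u ∈ {u ∈ Finset.Ico U (U + U) | d ∣ u}, {x ∈ S | x.1 = u}.card) * e * d := by ring
      _ ≤ {u ∈ Finset.Ico U (U + U) | d ∣ u}.card * (2 * V) * d := Nat.mul_le_mul_right _ h1
      _ = {u ∈ Finset.Ico U (U + U) | d ∣ u}.card * d * (2 * V) := by ring
      _ ≤ 2 * U * (2 * V) := Nat.mul_le_mul_right _ h2
      _ = _ := by ring
  · have hde : d * e ≤ U := by
      have hWU : max U V = U := by
        rcases max_choice U V with h | h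
        · exact h
        · rw [h] at heW
          have := Nat.sqrt_le_self V
          omega
      rw [hWU] at heW
      exact (Nat.mul_le_mul hdU heW).trans (Nat.sqrt_le U)
    set h := Nat.gcd e (d * q) with hh
    have hh0 : 1 ≤ h := Nat.gcd_pos_of_pos_left _ he
    obtain ⟨e', he'⟩ := Nat.gcd_dvd_left e (d * q)
    obtain ⟨f, hf⟩ := Nat.gcd_dvd_right e (d * q)
    rw [← hh] at he' hf
    have hcop : Nat.Coprime e' f := by
      have : h * Nat.gcd e' f = h * 1 := by
        rw [← Nat.gcd_mul_left, ← he', ← hf, ← hh, mul_one]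
      exact Nat.eq_of_mul_eq_mul_left hh0 this
    have he'0 : 1 ≤ e' := Nat.pos_of_ne_zero (by rintro rfl; simp at he'; omega)
    have hmaps : ∀ x ∈ S, x.2 ∈ {v ∈ Finset.Ico 1 (1 + V) | h ∣ v} := by
      intro x hx
      simp only [hS, Finset.mem_filter, Finset.mem_product] at hx ⊢
      rw [← hIcc]
      refine ⟨hx.1.2, ?_⟩
      obtain ⟨w, hw⟩ := hx.2.1
      have h1 : (h : ℤ) ∣ ε * x.2 + x.1 * q :=
        (Int.natCast_dvd_natCast.2 ⟨e', he'⟩).trans hx.2.2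
      have h2 : (h : ℤ) ∣ (x.1 : ℤ) * q := by
        rw [hw]
        have : (h : ℤ) ∣ ((d * q : ℕ) : ℤ) := Int.natCast_dvd_natCast.2 ⟨f, hf⟩
        push_cast at this ⊢
        rw [show (d : ℤ) * w * q = d * q * w by ring]
        exact this.mul_right _
      have h3 := ((dvd_add_left h2).1 h1).mul_left ε
      rw [← mul_assoc, hε2, one_mul] at h3
      exact Int.natCast_dvd_natCast.1 h3
    have hfib : ∀ v ∈ {v ∈ Finset.Ico 1 (1 + V) | h ∣ v},
        {x ∈ S | x.2 = v}.card * (d * e') ≤ 2 * U := by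
      intro v _
      have hinj : Set.InjOn Prod.fst (({x ∈ S | x.2 = v} : Finset (ℕ × ℕ)) : Set (ℕ × ℕ)) := by
        intro x hx y hy hxy
        simp only [Finset.coe_filter, Set.mem_ofPred_eq] at hx hy
        exact Prod.ext hxy (hx.2.trans hy.2.symm)
      rw [← Finset.card_image_of_injOn hinj]
      have hle : d * e' ≤ U := le_trans (Nat.mul_le_mul_left _
        (Nat.le_of_dvd he ⟨h, by rw [he', mul_comm]⟩)) hde
      refine card_mul_le_of_dvd_sub (a := U) (Nat.mul_pos hd he'0) hle ?_ ?_
      · intro u hu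
        obtain ⟨x, hx, rfl⟩ := Finset.mem_image.1 hu
        simp only [hS, Finset.mem_filter, Finset.mem_product] at hx
        rw [← hIco]
        exact hx.1.1.1
      · intro u hu w hw
        obtain ⟨x, hx, rfl⟩ := Finset.mem_image.1 hu
        obtain ⟨y, hy, rfl⟩ := Finset.mem_image.1 hw
        simp only [hS, Finset.mem_filter, Finset.mem_product] at hx hy
        have h1 := dvd_sub hx.1.2.2 hy.1.2.2
        rw [hx.2, hy.2] at h1
        obtain ⟨s, hs⟩ := hx.1.2.1
        obtain ⟨t, ht⟩ := hy.1.2.1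
        have h2 : ((h * e' : ℕ) : ℤ) ∣ (h : ℤ) * (f * ((s : ℤ) - t)) := by
          rw [← he']
          have hf' : (d : ℤ) * q = h * f := by exact_mod_cast hf
          have e1 : ε * (v : ℤ) + x.1 * q - (ε * v + y.1 * q) = h * (f * ((s : ℤ) - t)) := by
            rw [hs, ht]
            push_cast
            linear_combination ((s : ℤ) - t) * hf'
          rwa [e1] at h1
        push_cast at h2
        have h3 := (mul_dvd_mul_iff_left (show (h : ℤ) ≠ 0 by omega)).1 h2
        have h4 : (e' : ℤ) ∣ (s : ℤ) - t :=
          (Nat.isCoprime_iff_coprime.2 hcop).dvd_of_dvd_mul_left h3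
        rw [hs, ht]
        push_cast
        rw [← mul_sub]
        exact mul_dvd_mul_left _ h4
    have h2 : {v ∈ Finset.Ico 1 (1 + V) | h ∣ v}.card * h ≤ 2 * V := by
      rcases le_or_gt h V with hhV | hhV
      · exact card_multiples_mul_le hh0 hhV
      · rw [Finset.filter_false_of_mem]
        · simp
        · intro v hv hdv
          rw [Finset.mem_Ico] at hv
          have := Nat.le_of_dvd (by omega) hdv
          omega
    rw [Finset.card_eq_sum_card_fiberwise hmaps]
    have h1 := Finset.sum_le_sum hfib
    rw [← Finset.sum_mul, Finset.sum_const, smul_eq_mul] at h1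
    calc _ = (∑ v ∈ {v ∈ Finset.Ico 1 (1 + V) | h ∣ v}, {x ∈ S | x.2 = v}.card) * (d * e') * h := by
          rw [he']; ring
      _ ≤ {v ∈ Finset.Ico 1 (1 + V) | h ∣ v}.card * (2 * U) * h := Nat.mul_le_mul_right _ h1
      _ = {v ∈ Finset.Ico 1 (1 + V) | h ∣ v}.card * h * (2 * U) := by ring
      _ ≤ 2 * V * (2 * U) := Nat.mul_le_mul_right _ h2
      _ = _ := by ring

/-- for every `k ≥ 2` there is `C_k > 0` such that for all integers
`V₁, U₂, q ≥ 1` with `q ≤ U₂^{k−2}` and every sign `ε₁ ∈ {−1, 1}`: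
`∑_{U₂ ≤ u₂ < 2U₂} ∑_{1 ≤ v₁ ≤ V₁} τ_k(u₂)·τ_k(ε₁v₁ + u₂q)
  ≤ C_k · V₁U₂ · (1 + log(V₁U₂))^{3k}`. -/
theorem stmt10 (k : ℕ) (hk : 2 ≤ k) :
    ∃ C : ℝ, 0 < C ∧ ∀ V₁ U₂ q : ℕ, 1 ≤ V₁ → 1 ≤ U₂ → 1 ≤ q → q ≤ U₂ ^ (k - 2) →
      ∀ ε₁ : ℤ, (ε₁ = 1 ∨ ε₁ = -1) →
      (∑ u₂ ∈ Finset.Ico U₂ (2 * U₂), ∑ v₁ ∈ Finset.Icc 1 V₁,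
          (tauInt k (u₂ : ℤ) : ℝ) * (tauInt k (ε₁ * (v₁ : ℤ) + (u₂ : ℤ) * (q : ℤ)) : ℝ))
        ≤ C * ((V₁ : ℝ) * (U₂ : ℝ)) * (1 + Real.log ((V₁ : ℝ) * (U₂ : ℝ))) ^ (3 * k) := by
  classical
  obtain ⟨C, hC, g, hg0, hg⟩ := exists_tauNat_majorant k (by omega)
  refine ⟨4 * C ^ 2, by positivity, fun V U q hV hU _ hqU ε hε => ?_⟩
  set W := max U V with hW
  have hUW : U ≤ W := le_max_left _ _
  have hVW : V ≤ W := le_max_right _ _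
  have hW1 : 1 ≤ W := hU.trans hUW
  have hWUV : W ≤ V * U := max_le (Nat.le_mul_of_pos_left _ hV) (Nat.le_mul_of_pos_right _ hU)
  obtain ⟨hgU, hgU'⟩ := hg U hU
  obtain ⟨hgW, hgW'⟩ := hg W hW1
  set D := Finset.Icc 1 U.sqrt
  set E := Finset.Icc 1 W.sqrt
  have hu : ∀ u ∈ Finset.Ico U (2 * U), (tauInt k (u : ℤ) : ℝ) ≤
      ∑ d ∈ D, if d ∣ u then g U d else 0 := by
    intro u hu
    rw [Finset.mem_Ico] at hu
    rw [tauInt_natCast k (by omega), ← Finset.sum_filter]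
    refine hgU u (by omega) (hu.2.le.trans ?_)
    have := Nat.le_self_pow (show k ≠ 0 by omega) U
    omega
  have hN : ∀ u ∈ Finset.Ico U (2 * U), ∀ v ∈ Finset.Icc 1 V,
      (tauInt k (ε * (v : ℤ) + (u : ℤ) * (q : ℤ)) : ℝ) ≤
      ∑ e ∈ E, if (e : ℤ) ∣ ε * (v : ℤ) + (u : ℤ) * (q : ℤ) then g W e else 0 := by
    intro u hu v hv
    rw [Finset.mem_Ico] at hu
    rw [Finset.mem_Icc] at hv
    rcases le_or_gt (ε * (v : ℤ) + (u : ℤ) * (q : ℤ)) 0 with hle | hgt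
    · rw [tauInt_eq_zero k hle, Nat.cast_zero]
      exact Finset.sum_nonneg fun e _ => by split_ifs; exacts [hg0 W e, le_rfl]
    · obtain ⟨n, hn⟩ := Int.eq_ofNat_of_zero_le hgt.le
      rw [hn] at hgt ⊢
      have hn0 : n ≠ 0 := by omega
      simp only [Int.natCast_dvd_natCast]
      rw [tauInt_natCast k hn0, ← Finset.sum_filter]
      refine hgW n hn0 ?_
      have h1 : n ≤ V + u * q := by
        have : (n : ℤ) ≤ V + u * q := by
          rw [← hn]
          rcases hε with rfl | rfl <;> omega
        exact_mod_cast this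
      have h2 : u * q ≤ 2 * W ^ k := by
        calc u * q ≤ (2 * U) * U ^ (k - 2) := Nat.mul_le_mul hu.2.le hqU
          _ ≤ (2 * W) * W ^ (k - 2) := by gcongr
          _ = 2 * W ^ (k - 2 + 1) := by ring
          _ ≤ 2 * W ^ k := Nat.mul_le_mul_left _ (Nat.pow_le_pow_right hW1 (by omega))
      have h3 : V ≤ W ^ k := hVW.trans (Nat.le_self_pow (by omega) W)
      omega
  have hUR : (0 : ℝ) < U := by exact_mod_cast hU
  have hVR : (0 : ℝ) < V := by exact_mod_cast hV
  have hpair : ∀ d ∈ D, ∀ e ∈ E,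
      ∑ x ∈ Finset.Ico U (2 * U) ×ˢ Finset.Icc 1 V,
        (if d ∣ x.1 then g U d else 0) *
          (if (e : ℤ) ∣ ε * (x.2 : ℤ) + (x.1 : ℤ) * (q : ℤ) then g W e else 0) ≤
      4 * (V * U) * ((g U d / d) * (g W e / e)) := by
    intro d hd e he
    rw [Finset.mem_Icc] at hd he
    have hcard := card_pairs_mul_le (q := q) hd.1 he.1 hd.2 he.2 hε
    have hcardR : (({x ∈ Finset.Ico U (2 * U) ×ˢ Finset.Icc 1 V |
      d ∣ x.1 ∧ (e : ℤ) ∣ ε * x.2 + x.1 * q}.card : ℕ) : ℝ) * (d * e) ≤ 4 * (V * U) := by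
      exact_mod_cast hcard
    have hd0 : (0 : ℝ) < d := by exact_mod_cast hd.1
    have he0 : (0 : ℝ) < e := by exact_mod_cast he.1
    simp only [ite_zero_mul_ite_zero]
    rw [← Finset.sum_filter, Finset.sum_const, nsmul_eq_mul]
    rw [← le_div_iff₀ (by positivity)] at hcardR
    calc _ ≤ 4 * ((V : ℝ) * U) / (d * e) * (g U d * g W e) :=
          mul_le_mul_of_nonneg_right hcardR (mul_nonneg (hg0 _ _) (hg0 _ _))
      _ = _ := by field_simp
  have hlog : ∀ X : ℕ, 1 ≤ X → X ≤ V * U →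
      0 ≤ Real.log X ∧ Real.log X ≤ Real.log ((V : ℝ) * U) := fun X hX hXW =>
    ⟨Real.log_natCast_nonneg X,
      Real.log_le_log (by exact_mod_cast hX) (by exact_mod_cast hXW)⟩
  obtain ⟨hlU0, hlU⟩ := hlog U hU (hUW.trans hWUV)
  obtain ⟨hlW0, hlW⟩ := hlog W hW1 hWUV
  set L := Real.log ((V : ℝ) * U)
  calc _ ≤ ∑ u ∈ Finset.Ico U (2 * U), ∑ v ∈ Finset.Icc 1 V,
        (∑ d ∈ D, if d ∣ u then g U d else 0) *
          (∑ e ∈ E, if (e : ℤ) ∣ ε * (v : ℤ) + (u : ℤ) * (q : ℤ) then g W e else 0) := by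
        refine Finset.sum_le_sum fun u hu' => Finset.sum_le_sum fun v hv => ?_
        exact mul_le_mul (hu u hu') (hN u hu' v hv) (Nat.cast_nonneg _)
          ((Nat.cast_nonneg _).trans (hu u hu'))
    _ = ∑ d ∈ D, ∑ e ∈ E, ∑ x ∈ Finset.Ico U (2 * U) ×ˢ Finset.Icc 1 V,
        (if d ∣ x.1 then g U d else 0) *
          (if (e : ℤ) ∣ ε * (x.2 : ℤ) + (x.1 : ℤ) * (q : ℤ) then g W e else 0) := by
        rw [← Finset.sum_product']
        simp only [Finset.sum_mul_sum]
        rw [Finset.sum_comm]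
        exact Finset.sum_congr rfl fun d _ => Finset.sum_comm
    _ ≤ ∑ d ∈ D, ∑ e ∈ E, 4 * ((V : ℝ) * U) * ((g U d / d) * (g W e / e)) :=
        Finset.sum_le_sum fun d hd => Finset.sum_le_sum fun e he => hpair d hd e he
    _ = 4 * ((V : ℝ) * U) * ((∑ d ∈ D, g U d / d) * ∑ e ∈ E, g W e / e) := by
        rw [Finset.sum_mul_sum, Finset.mul_sum]
        exact Finset.sum_congr rfl fun d _ => by rw [Finset.mul_sum]
    _ ≤ 4 * ((V : ℝ) * U) * ((C * (1 + L) ^ k) * (C * (1 + L) ^ k)) := by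
        have hE0 : 0 ≤ ∑ e ∈ E, g W e / e :=
          Finset.sum_nonneg fun e _ => div_nonneg (hg0 _ _) (Nat.cast_nonneg _)
        have hL0 : 0 ≤ L := hlU0.trans hlU
        exact mul_le_mul_of_nonneg_left (mul_le_mul (hgU'.trans (by gcongr))
          (hgW'.trans (by gcongr)) hE0 (by positivity)) (by positivity)
    _ = 4 * C ^ 2 * ((V : ℝ) * U) * (1 + L) ^ (2 * k) := by ring
    _ ≤ 4 * C ^ 2 * ((V : ℝ) * U) * (1 + L) ^ (3 * k) := by
        gcongr
        · linarith
        · norm_num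
end
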